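/- Let N ≥ 1 and q > 1, let r, ρ > 0 and T ≥ (r+ρ)², and set ℰ_{r+ρ} = {(x,t) : |x|² + t ≤ (r+ρ)²}. There exists C = C(N,q) > 0 such that for every compact set K ⊆ B_r, every η ∈ 𝒯_{r,ρ}(K), and every positive solution u of ∂_t u − Δu + u^q = 0 in Q_∞ whose initial trace vanishes outside K: ∬_{(ℝ^N×(0,T]) \ ℰ_{r+ρ}} u^q dx dt + ∫_{ℝ^N} u(x,T) dx ≤ C ‖R[η]‖_{L^{q'}}^{q'}. -/

import Mathlib

open MeasureTheory Real Set Filter Metric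

noncomputable section

abbrev Euc (N : ℕ) := EuclideanSpace ℝ (Fin N)

/-- Spatial Laplacian of `f : ℝ^N → ℝ`. -/
def lapl {N : ℕ} (f : Euc N → ℝ) (x : Euc N) : ℝ :=
  ∑ i : Fin N,
    fderiv ℝ (fun y => fderiv ℝ f y (EuclideanSpace.single i 1)) x (EuclideanSpace.single i 1)

/-- The capacity `C_{2/q,q'}` of a set `A ⊆ ℝ^N`. -/
def capQ (N : ℕ) (q : ℝ) (A : Set (Euc N)) : ℝ :=
  sInf { c : ℝ | ∃ φ : Euc N → ℝ, ContDiff ℝ (⊤ : ℕ∞) φ ∧ HasCompactSupport φ ∧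
      (∃ U : Set (Euc N), IsOpen U ∧ A ⊆ U ∧ ∀ x ∈ U, 1 ≤ φ x) ∧
      c = (∫ x, φ x ^ (q / (q - 1))) +
          ∫ x, ∫ y, |φ x - φ y| ^ (q / (q - 1)) / ‖x - y‖ ^ ((N : ℝ) + 2 / (q - 1)) }

/-- The spherical shell piece `F_n` of `F` around `x` at time `t`. -/
def shell (N : ℕ) (F : Set (Euc N)) (x : Euc N) (t : ℝ) (n : ℕ) : Set (Euc N) :=
  {y | y ∈ F ∧ Real.sqrt ((n : ℝ) * t) ≤ dist x y ∧ dist x y ≤ Real.sqrt (((n : ℝ) + 1) * t)}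

/-- The parabolic capacitary potential `W_F`. -/
def Wpot (N : ℕ) (q : ℝ) (F : Set (Euc N)) (x : Euc N) (t : ℝ) : ℝ :=
  t ^ (-(N : ℝ) / 2) *
    ∑' n : ℕ,
      Real.sqrt (((n : ℝ) + 1) * t) ^ ((N : ℝ) - 2 / (q - 1)) * Real.exp (-(n : ℝ) / 4) *
        capQ N q ((fun y => (Real.sqrt (((n : ℝ) + 1) * t))⁻¹ • y) '' shell N F x t n)

/-- `u` is a positive solution of `∂ₜu - Δu + u^q = 0` in `Q_∞` whose initial
trace vanishes outside the closed set `F`. -/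
def IsSol (N : ℕ) (q : ℝ) (u : Euc N → ℝ → ℝ) (F : Set (Euc N)) : Prop :=
  ContDiffOn ℝ 2 (fun p : Euc N × ℝ => u p.1 p.2) (Set.univ ×ˢ Set.Ioi (0 : ℝ)) ∧
  (∀ x t, 0 < t → 0 < u x t) ∧
  (∀ x t, 0 < t → deriv (u x) t - lapl (fun y => u y t) x + u x t ^ q = 0) ∧
  (∀ E : Set (Euc N), IsCompact E → E ⊆ Fᶜ →
    Tendsto (fun t => sSup ((fun x => u x t) '' E)) (nhdsWithin 0 (Set.Ioi 0)) (nhds 0))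

/-- The heat potential of a function. -/
def heatPot (N : ℕ) (η : Euc N → ℝ) (x : Euc N) (t : ℝ) : ℝ :=
  ∫ y, (4 * π * t) ^ (-(N : ℝ) / 2) * Real.exp (-‖x - y‖ ^ 2 / (4 * t)) * η y

/-- The heat potential of a measure. -/
def heatPotM (N : ℕ) (μ : Measure (Euc N)) (x : Euc N) (t : ℝ) : ℝ :=
  ∫ y, (4 * π * t) ^ (-(N : ℝ) / 2) * Real.exp (-‖x - y‖ ^ 2 / (4 * t)) ∂μ

/-- The class `𝒯_{r,ρ}(K)` of test functions. -/
def TestFun (N : ℕ) (r ρ : ℝ) (K : Set (Euc N)) (η : Euc N → ℝ) : Prop :=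
  ContDiff ℝ (⊤ : ℕ∞) η ∧ HasCompactSupport η ∧ tsupport η ⊆ Metric.ball (0 : Euc N) (r + ρ) ∧
  (∀ x, 0 ≤ η x ∧ η x ≤ 1) ∧ (∀ x ∈ K, η x = 1)

/-- `‖R[η]‖_{L^{q'}}^{q'} = ∬_{Q_∞} (|∇ℍ[η]|² + |∂ₜℍ[η]|)^{q'} dx dt`. -/
def Rnorm (N : ℕ) (q : ℝ) (η : Euc N → ℝ) : ℝ :=
  ∫ t in Set.Ioi (0 : ℝ), ∫ x,
    (‖fderiv ℝ (fun y => heatPot N η y t) x‖ ^ 2 +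
      |deriv (fun τ => heatPot N η x τ) t|) ^ (q / (q - 1))


def hker (N : ℕ) (t : ℝ) (z : Euc N) : ℝ :=
  (4 * π * t) ^ (-(N : ℝ) / 2) * Real.exp (-‖z‖ ^ 2 / (4 * t))

theorem heatPot_eq (N : ℕ) (η : Euc N → ℝ) (x : Euc N) (t : ℝ) :
    heatPot N η x t = ∫ y, hker N t (x - y) * η y := rfl

theorem hker_pos {N : ℕ} {t : ℝ} (ht : 0 < t) (z : Euc N) : 0 < hker N t z := by
  unfold hker; positivity

theorem hker_cont {N : ℕ} (t : ℝ) : Continuous (hker N t) := by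
  unfold hker; fun_prop

theorem hker_integral {N : ℕ} {t : ℝ} (ht : 0 < t) : ∫ z, hker N t z = 1 := by
  unfold hker
  rw [integral_const_mul]
  have h := GaussianFourier.integral_rexp_neg_mul_sq_norm (V := Euc N) (b := 1 / (4 * t)) (by positivity)
  have e : (fun v : Euc N => rexp (-(1 / (4 * t)) * ‖v‖ ^ 2)) = fun z => rexp (-‖z‖ ^ 2 / (4 * t)) := by
    ext v; congr 1; ring
  rw [e] at h
  rw [h, finrank_euclideanSpace, Fintype.card_fin]
  have : π / (1 / (4 * t)) = 4 * π * t := by field_simp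
  rw [this, ← Real.rpow_add (by positivity)]
  rw [show -(N : ℝ) / 2 + (N : ℝ) / 2 = 0 by ring, Real.rpow_zero]

theorem hker_integrable {N : ℕ} {t : ℝ} (ht : 0 < t) : Integrable (hker N t) := by
  by_contra h
  have := hker_integral (N := N) ht
  rw [integral_undef h] at this
  exact zero_ne_one this

theorem hker_two {N : ℕ} {t : ℝ} (ht : 0 < t) (z : Euc N) :
    hker N t z = (2 : ℝ) ^ ((N : ℝ) / 2) * hker N (2 * t) z * rexp (-‖z‖ ^ 2 / (8 * t)) := by
  unfold hker
  rw [show 4 * π * (2 * t) = 2 * (4 * π * t) by ring, Real.mul_rpow (x := 2) (y := 4 * π * t) (by norm_num) (by positivity)]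
  have h1 : (2 : ℝ) ^ ((N : ℝ) / 2) * 2 ^ (-(N : ℝ) / 2) = 1 := by
    rw [← Real.rpow_add (by norm_num)]
    rw [show (N : ℝ) / 2 + -(N : ℝ) / 2 = 0 by ring, Real.rpow_zero]
  have h2 : rexp (-‖z‖ ^ 2 / (4 * t)) = rexp (-‖z‖ ^ 2 / (4 * (2 * t))) * rexp (-‖z‖ ^ 2 / (8 * t)) := by
    rw [← Real.exp_add]; congr 1; field_simp; ring
  rw [h2]
  linear_combination (-(4 * π * t) ^ (-(N : ℝ) / 2) * (rexp (-‖z‖ ^ 2 / (4 * (2 * t))) * rexp (-‖z‖ ^ 2 / (8 * t)))) * h1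

theorem sq_exp {t : ℝ} (ht : 0 < t) (a : ℝ) :
    a ^ 2 * rexp (-a ^ 2 / (8 * t)) ≤ 8 * t := by
  have h := Real.add_one_le_exp (a ^ 2 / (8 * t))
  have h3 : a ^ 2 ≤ 8 * t * rexp (a ^ 2 / (8 * t)) := by
    have : a ^ 2 = 8 * t * (a ^ 2 / (8 * t)) := by field_simp
    nlinarith
  rw [show -a ^ 2 / (8 * t) = -(a ^ 2 / (8 * t)) by ring, Real.exp_neg]
  rw [← div_eq_mul_inv, div_le_iff₀ (Real.exp_pos _)]
  exact h3

theorem one_exp {t : ℝ} (ht : 0 < t) (a : ℝ) (ha : 0 ≤ a) :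
    a * rexp (-a ^ 2 / (8 * t)) ≤ 3 * √t := by
  have h := sq_exp ht a
  have h1 : rexp (-a ^ 2 / (8 * t)) ≤ 1 := by
    apply Real.exp_le_one_iff.2
    have : 0 ≤ a ^ 2 / (8 * t) := by positivity
    rw [neg_div]; linarith
  have h0 := Real.exp_pos (-a ^ 2 / (8 * t))
  apply abs_le_of_sq_le_sq' _ (by positivity) |>.2
  rw [mul_pow, mul_pow, Real.sq_sqrt ht.le]
  have : a ^ 2 * rexp (-a ^ 2 / (8 * t)) ^ 2 ≤ a ^ 2 * rexp (-a ^ 2 / (8 * t)) := by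
    apply mul_le_mul_of_nonneg_left _ (sq_nonneg a)
    nlinarith
  linarith

theorem norm_mul_ker_le {N : ℕ} {t : ℝ} (ht : 0 < t) (z : Euc N) :
    ‖z‖ * hker N t z ≤ 3 * (2 : ℝ) ^ ((N : ℝ) / 2) * √t * hker N (2 * t) z := by
  rw [hker_two ht]
  have := one_exp ht ‖z‖ (norm_nonneg _)
  have h2 := hker_pos (show 0 < 2 * t by positivity) z
  have h3 : (0 : ℝ) < (2 : ℝ) ^ ((N : ℝ) / 2) := by positivity
  calc _ = ((2 : ℝ) ^ ((N : ℝ) / 2) * hker N (2 * t) z) * (‖z‖ * rexp (-‖z‖ ^ 2 / (8 * t))) := by ring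
    _ ≤ ((2 : ℝ) ^ ((N : ℝ) / 2) * hker N (2 * t) z) * (3 * √t) := by gcongr
    _ = _ := by ring

theorem normsq_mul_ker_le {N : ℕ} {t : ℝ} (ht : 0 < t) (z : Euc N) :
    ‖z‖ ^ 2 * hker N t z ≤ 8 * (2 : ℝ) ^ ((N : ℝ) / 2) * t * hker N (2 * t) z := by
  rw [hker_two ht]
  have := sq_exp ht ‖z‖
  have h2 := hker_pos (show 0 < 2 * t by positivity) z
  have h3 : (0 : ℝ) < (2 : ℝ) ^ ((N : ℝ) / 2) := by positivity
  calc _ = ((2 : ℝ) ^ ((N : ℝ) / 2) * hker N (2 * t) z) * (‖z‖ ^ 2 * rexp (-‖z‖ ^ 2 / (8 * t))) := by ring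
    _ ≤ ((2 : ℝ) ^ ((N : ℝ) / 2) * hker N (2 * t) z) * (8 * t) := by gcongr
    _ = _ := by ring

theorem hker_le_two {N : ℕ} {t : ℝ} (ht : 0 < t) (z : Euc N) :
    hker N t z ≤ (2 : ℝ) ^ ((N : ℝ) / 2) * hker N (2 * t) z := by
  rw [hker_two ht]
  have h2 := hker_pos (show 0 < 2 * t by positivity) z
  have h3 : (0 : ℝ) < (2 : ℝ) ^ ((N : ℝ) / 2) := by positivity
  have h1 : rexp (-‖z‖ ^ 2 / (8 * t)) ≤ 1 := by
    apply Real.exp_le_one_iff.2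
    have : 0 ≤ ‖z‖ ^ 2 / (8 * t) := by positivity
    rw [neg_div]; linarith
  exact mul_le_of_le_one_right (by positivity) h1

/-- time derivative of the kernel -/
theorem hker_deriv_t {N : ℕ} {t : ℝ} (ht : 0 < t) (z : Euc N) :
    HasDerivAt (fun τ => hker N τ z) ((‖z‖ ^ 2 / (4 * t ^ 2) - N / (2 * t)) * hker N t z) t := by
  unfold hker
  have h1 : HasDerivAt (fun τ : ℝ => 4 * π * τ) (4 * π) t := by
    simpa using (hasDerivAt_id t).const_mul (4 * π)
  have h2 := h1.rpow_const (p := -(N : ℝ) / 2) (Or.inl (by positivity))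
  have h3 : HasDerivAt (fun τ : ℝ => -‖z‖ ^ 2 / (4 * τ)) (‖z‖ ^ 2 / (4 * t ^ 2)) t := by
    have := ((hasDerivAt_id t).const_mul (4 : ℝ)).inv (by simp; positivity) |>.const_mul (-‖z‖ ^ 2)
    refine (this.congr_deriv ?_).congr_of_eventuallyEq ?_
    · simp; field_simp
    · filter_upwards with τ
      simp [div_eq_mul_inv]
  refine (h2.mul h3.exp).congr_deriv ?_
  rw [Real.rpow_sub_one (by positivity)]
  field_simp
  ring

theorem nsq_line {N : ℕ} (z : Euc N) (i : Fin N) (τ : ℝ) :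
    ‖z + τ • EuclideanSpace.single i (1 : ℝ)‖ ^ 2 = ‖z‖ ^ 2 + 2 * τ * z i + τ ^ 2 := by
  rw [norm_add_sq_real, norm_smul, inner_smul_right]
  simp [mul_pow, EuclideanSpace.inner_single_right]
  ring

theorem nsq_lineDeriv {N : ℕ} (z : Euc N) (i : Fin N) :
    HasDerivAt (fun τ : ℝ => ‖z + τ • EuclideanSpace.single i (1 : ℝ)‖ ^ 2) (2 * z i) 0 := by
  simp_rw [nsq_line]
  have := (((hasDerivAt_id (0 : ℝ)).const_mul 2).mul_const (z i)).const_add (‖z‖ ^ 2) |>.add ((hasDerivAt_id (0 : ℝ)).pow 2)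
  refine this.congr_deriv ?_
  simp

theorem hker_line {N : ℕ} {t : ℝ} (ht : 0 < t) (z : Euc N) (i : Fin N) :
    HasLineDerivAt ℝ (hker N t) (-(z i) / (2 * t) * hker N t z) z (EuclideanSpace.single i 1) := by
  unfold HasLineDerivAt hker
  have := (((nsq_lineDeriv z i).neg.div_const (4 * t)).exp).const_mul ((4 * π * t) ^ (-(N : ℝ) / 2))
  refine this.congr_deriv ?_
  simp
  field_simp
  ring

theorem hker_line2 {N : ℕ} {t : ℝ} (ht : 0 < t) (z : Euc N) (i : Fin N) :
    HasLineDerivAt ℝ (fun z => -(z i) / (2 * t) * hker N t z)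
      (((z i) ^ 2 / (4 * t ^ 2) - 1 / (2 * t)) * hker N t z) z (EuclideanSpace.single i 1) := by
  have h1 := hker_line ht z i
  unfold HasLineDerivAt at *
  have h2 : HasDerivAt (fun τ : ℝ => -((z + τ • EuclideanSpace.single i (1 : ℝ)) i) / (2 * t)) (-1 / (2 * t)) 0 := by
    have : HasDerivAt (fun τ : ℝ => z i + τ) 1 0 := by simpa using (hasDerivAt_id (0 : ℝ)).const_add (z i)
    refine (this.neg.div_const (2 * t)).congr_of_eventuallyEq ?_
    filter_upwards with τ; simp
  refine (h2.mul h1).congr_deriv ?_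
  simp
  field_simp
  ring

theorem hker_lap {N : ℕ} {t : ℝ} (ht : 0 < t) (z : Euc N) :
    ∑ i, (((z i) ^ 2 / (4 * t ^ 2) - 1 / (2 * t)) * hker N t z) =
      (‖z‖ ^ 2 / (4 * t ^ 2) - N / (2 * t)) * hker N t z := by
  rw [← Finset.sum_mul, Finset.sum_sub_distrib, ← Finset.sum_div, EuclideanSpace.norm_sq_eq]
  simp
  left
  ring

theorem hker_contDiffOn {N : ℕ} :
    ContDiffOn ℝ 2 (fun p : ℝ × Euc N => hker N p.1 p.2) (Ioi 0 ×ˢ univ) := by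
  unfold hker
  have h1 : ContDiffOn ℝ 2 (fun p : ℝ × Euc N => 4 * π * p.1) (Ioi 0 ×ˢ univ) := by fun_prop
  have h2 : ContDiffOn ℝ 2 (fun p : ℝ × Euc N => 4 * p.1) (Ioi 0 ×ˢ univ) := by fun_prop
  have h3 : ContDiffOn ℝ 2 (fun p : ℝ × Euc N => -‖p.2‖ ^ 2) (Ioi 0 ×ˢ univ) :=
    (contDiff_snd.norm_sq ℝ).neg.contDiffOn
  refine ContDiffOn.mul (h1.rpow_const_of_ne ?_) (h3.div h2 ?_).exp
  · rintro ⟨t, z⟩ ⟨ht, -⟩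
    have : (0 : ℝ) < t := ht
    positivity
  · rintro ⟨t, z⟩ ⟨ht, -⟩
    have : (0 : ℝ) < t := ht
    positivity


def C2 (N : ℕ) (F : Euc N → ℝ → ℝ) : Prop :=
  ContDiffOn ℝ 2 (fun p : Euc N × ℝ => F p.1 p.2) (univ ×ˢ Ioi 0)

abbrev QQ (N : ℕ) : Set (Euc N × ℝ) := univ ×ˢ Ioi 0

theorem QQ_open (N : ℕ) : IsOpen (QQ N) := isOpen_univ.prod isOpen_Ioi

theorem C2.at {N : ℕ} {F : Euc N → ℝ → ℝ} (h : C2 N F) {t : ℝ} (ht : 0 < t) (x : Euc N) :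
    ContDiffAt ℝ 2 (fun p : Euc N × ℝ => F p.1 p.2) (x, t) :=
  ContDiffOn.contDiffAt h ((QQ_open N).mem_nhds (by simp [QQ, ht]))

theorem C2.slice {N : ℕ} {F : Euc N → ℝ → ℝ} (h : C2 N F) {t : ℝ} (ht : 0 < t) :
    ContDiff ℝ 2 (fun y => F y t) := by
  rw [contDiff_iff_contDiffAt]
  intro x
  exact ContDiffAt.comp x (h.at ht x) (f := fun y => (y, t)) (by fun_prop)

theorem C2.hfd {N : ℕ} {F : Euc N → ℝ → ℝ} (h : C2 N F) {t : ℝ} (ht : 0 < t) (x : Euc N) :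
    HasFDerivAt (fun y => F y t) ((fderiv ℝ (fun p : Euc N × ℝ => F p.1 p.2) (x, t)).comp
      (ContinuousLinearMap.inl ℝ (Euc N) ℝ)) x := by
  have h1 := ((h.at ht x).differentiableAt (by norm_num)).hasFDerivAt
  have h2 : HasFDerivAt (fun y : Euc N => (y, t)) (ContinuousLinearMap.inl ℝ (Euc N) ℝ) x :=
    hasFDerivAt_prodMk_left x t
  exact HasFDerivAt.comp (g := fun p : Euc N × ℝ => F p.1 p.2) x h1 h2

theorem C2.td {N : ℕ} {F : Euc N → ℝ → ℝ} (h : C2 N F) {t : ℝ} (ht : 0 < t) (x : Euc N) :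
    HasDerivAt (F x) (fderiv ℝ (fun p : Euc N × ℝ => F p.1 p.2) (x, t) (0, 1)) t := by
  have h1 := ((h.at ht x).differentiableAt (by norm_num)).hasFDerivAt
  have h2 : HasFDerivAt (fun y : ℝ => (x, y)) (ContinuousLinearMap.inr ℝ (Euc N) ℝ) t :=
    hasFDerivAt_prodMk_right x t
  have := (HasFDerivAt.comp (g := fun p : Euc N × ℝ => F p.1 p.2) t h1 h2).hasDerivAt
  exact this.congr_deriv (by simp)

theorem C2.cont {N : ℕ} {F : Euc N → ℝ → ℝ} (h : C2 N F) :
    ContinuousOn (fun p : Euc N × ℝ => F p.1 p.2) (QQ N) := ContDiffOn.continuousOn h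

theorem C2.fd1 {N : ℕ} {F : Euc N → ℝ → ℝ} (h : C2 N F) :
    ContDiffOn ℝ 1 (fderiv ℝ (fun p : Euc N × ℝ => F p.1 p.2)) (QQ N) :=
  ContDiffOn.fderiv_of_isOpen h (QQ_open N) (by norm_num)

theorem C2.cont_fderiv {N : ℕ} {F : Euc N → ℝ → ℝ} (h : C2 N F) :
    ContinuousOn (fun p : Euc N × ℝ => fderiv ℝ (fun y => F y p.2) p.1) (QQ N) := by
  have : ContinuousOn (fun p : Euc N × ℝ => (fderiv ℝ (fun p : Euc N × ℝ => F p.1 p.2) p).comp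
      (ContinuousLinearMap.inl ℝ (Euc N) ℝ)) (QQ N) := by
    have := h.fd1.continuousOn
    fun_prop
  refine this.congr ?_
  rintro ⟨x, t⟩ ⟨-, ht⟩
  exact (h.hfd ht x).fderiv

theorem C2.cont_dt {N : ℕ} {F : Euc N → ℝ → ℝ} (h : C2 N F) :
    ContinuousOn (fun p : Euc N × ℝ => deriv (F p.1) p.2) (QQ N) := by
  have : ContinuousOn (fun p : Euc N × ℝ => fderiv ℝ (fun p : Euc N × ℝ => F p.1 p.2) p (0, 1)) (QQ N) := by
    have := h.fd1.continuousOn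
    fun_prop
  refine this.congr ?_
  rintro ⟨x, t⟩ ⟨-, ht⟩
  exact (h.td ht x).deriv

theorem C2.di1 {N : ℕ} {F : Euc N → ℝ → ℝ} (h : C2 N F) (v : Euc N) :
    ContDiffOn ℝ 1 (fun p : Euc N × ℝ => fderiv ℝ (fun y => F y p.2) p.1 v) (QQ N) := by
  have : ContDiffOn ℝ 1 (fun p : Euc N × ℝ => fderiv ℝ (fun p : Euc N × ℝ => F p.1 p.2) p (v, 0)) (QQ N) :=
    h.fd1.clm_apply contDiffOn_const
  refine this.congr ?_
  rintro ⟨x, t⟩ ⟨-, ht⟩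
  simp [(h.hfd ht x).fderiv]

theorem C2.cont_dii {N : ℕ} {F : Euc N → ℝ → ℝ} (h : C2 N F) (v : Euc N) :
    ContinuousOn (fun p : Euc N × ℝ => fderiv ℝ (fun z => fderiv ℝ (fun y => F y p.2) z v) p.1 v) (QQ N) := by
  have h1 := h.di1 v
  have h2 : ContinuousOn (fun p : Euc N × ℝ =>
      fderiv ℝ (fun p : Euc N × ℝ => fderiv ℝ (fun y => F y p.2) p.1 v) p (v, 0)) (QQ N) := by
    have := h1.continuousOn_fderiv_of_isOpen (QQ_open N) le_rfl
    fun_prop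
  refine h2.congr ?_
  rintro ⟨x, t⟩ ⟨-, ht⟩
  have h3 : HasFDerivAt (fun p : Euc N × ℝ => fderiv ℝ (fun y => F y p.2) p.1 v) _ (x, t) :=
    ((h1.contDiffAt ((QQ_open N).mem_nhds ⟨mem_univ _, ht⟩)).differentiableAt
    (by norm_num)).hasFDerivAt
  have h2 : HasFDerivAt (fun y : Euc N => (y, t)) (ContinuousLinearMap.inl ℝ (Euc N) ℝ) x :=
    hasFDerivAt_prodMk_left x t
  have h4 := HasFDerivAt.comp (g := fun p : Euc N × ℝ => fderiv ℝ (fun y => F y p.2) p.1 v) x h3 h2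
  have h5 : fderiv ℝ (fun z => fderiv ℝ (fun y => F y t) z v) x = _ := h4.fderiv
  simp [h5]

theorem C2.cont_lapl {N : ℕ} {F : Euc N → ℝ → ℝ} (h : C2 N F) :
    ContinuousOn (fun p : Euc N × ℝ => lapl (fun y => F y p.2) p.1) (QQ N) := by
  unfold lapl
  exact continuousOn_finsetSum _ fun i _ => h.cont_dii _

/-- differentiation under the integral sign, compactly supported weight -/
theorem param_deriv {N : ℕ} {η : Euc N → ℝ} (hη : Continuous η) (hc : HasCompactSupport η)
    (f f' : ℝ → Euc N → ℝ) (a δ : ℝ) (hδ : 0 < δ) (hf : ∀ τ ∈ closedBall a δ, Continuous (f τ))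
    (hd : ∀ τ ∈ closedBall a δ, ∀ y, HasDerivAt (fun τ => f τ y) (f' τ y) τ)
    (hf' : ContinuousOn (fun p : ℝ × Euc N => f' p.1 p.2) (closedBall a δ ×ˢ univ)) :
    HasDerivAt (fun τ => ∫ y, f τ y * η y) (∫ y, f' a y * η y) a := by
  obtain ⟨M, hM⟩ := ((isCompact_closedBall a δ).prod hc.isCompact).exists_bound_of_continuousOn
    (hf'.mono (prod_mono le_rfl (subset_univ _)))
  have ha : a ∈ closedBall a δ := mem_closedBall_self hδ.le
  have hfa : Continuous (f' a) := by
    rw [← continuousOn_univ]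
    exact hf'.comp (f := fun y => (a, y)) (by fun_prop) (fun y _ => ⟨ha, mem_univ _⟩)
  have hI : Integrable η := hη.integrable_of_hasCompactSupport hc
  refine (hasDerivAt_integral_of_dominated_loc_of_deriv_le (F' := fun τ y => f' τ y * η y)
    (bound := fun y => M * |η y|) (closedBall_mem_nhds a hδ) ?_ ?_ ?_ ?_ ?_ ?_).2
  · filter_upwards [closedBall_mem_nhds a hδ] with τ hτ
    exact ((hf τ hτ).mul hη).aestronglyMeasurable
  · exact ((hf a ha).mul hη).integrable_of_hasCompactSupport hc.mul_left
  · exact (hfa.mul hη).aestronglyMeasurable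
  · refine Eventually.of_forall fun y τ hτ => ?_
    rw [norm_mul, Real.norm_eq_abs (η y)]
    by_cases hy : y ∈ tsupport η
    · gcongr
      exact hM (τ, y) ⟨hτ, hy⟩
    · simp [image_eq_zero_of_notMem_tsupport hy]
  · exact hI.abs.const_mul M
  · exact Eventually.of_forall fun y τ hτ => (hd τ hτ y).mul_const _

theorem line_shift {N : ℕ} {g g' : Euc N → ℝ} {e : Euc N} (h : ∀ z, HasLineDerivAt ℝ g (g' z) z e)
    (z : Euc N) (τ : ℝ) : HasDerivAt (fun s : ℝ => g (z + s • e)) (g' (z + τ • e)) τ := by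
  have h1 : HasDerivAt (fun s : ℝ => g (z + τ • e + s • e)) (g' (z + τ • e)) (τ - τ) := by
    rw [sub_self]; exact h (z + τ • e)
  have h2 := h1.comp_sub_const τ τ
  refine h2.congr_of_eventuallyEq ?_
  filter_upwards with s
  congr 1
  module

theorem conv_line {N : ℕ} {η : Euc N → ℝ} (hη : Continuous η) (hc : HasCompactSupport η)
    {g g' : Euc N → ℝ} {e : Euc N} (hg : Continuous g) (hg' : Continuous g')
    (h : ∀ z, HasLineDerivAt ℝ g (g' z) z e) (x : Euc N) :
    HasLineDerivAt ℝ (fun x => ∫ y, g (x - y) * η y) (∫ y, g' (x - y) * η y) x e := by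
  unfold HasLineDerivAt
  have := param_deriv hη hc (fun τ y => g (x + τ • e - y)) (fun τ y => g' (x + τ • e - y)) 0 1 one_pos
    (fun τ _ => by fun_prop) ?_ (by fun_prop)
  · simpa using this
  · intro τ _ y
    have := line_shift h (x - y) τ
    simpa [add_sub_right_comm] using this

/-- moving the derivative to `η` -/
theorem conv_ibp {N : ℕ} {η η' : Euc N → ℝ} (hη : Continuous η) (hc : HasCompactSupport η)
    (hη' : Continuous η') (hc' : HasCompactSupport η')
    {g g' : Euc N → ℝ} {e : Euc N} (hg : Continuous g) (hg' : Continuous g')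
    (h : ∀ z, HasLineDerivAt ℝ g (g' z) z e) (hh : ∀ z, HasLineDerivAt ℝ η (η' z) z e) (x : Euc N) :
    ∫ y, g' (x - y) * η y = ∫ y, g (x - y) * η' y := by
  have := integral_bilinear_hasLineDerivAt_right_eq_neg_left_of_integrable (μ := volume)
    (f := fun y => g (x - y)) (f' := fun y => - g' (x - y)) (g := η) (g' := η') (v := e)
    (B := ContinuousLinearMap.mul ℝ ℝ) ?_ ?_ ?_ ?_ ?_
  · simp only [ContinuousLinearMap.mul_apply', neg_mul, integral_neg, neg_neg] at this
    exact this.symm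
  · exact Continuous.integrable_of_hasCompactSupport (by simp; fun_prop) hc.mul_left
  · exact Continuous.integrable_of_hasCompactSupport (by simp; fun_prop) hc'.mul_left
  · exact Continuous.integrable_of_hasCompactSupport (by simp; fun_prop) hc.mul_left
  · intro y _
    have h1 : HasDerivAt (fun s : ℝ => g (x - y + s • e)) (g' (x - y)) (-0) := by
      rw [neg_zero]; exact h (x - y)
    have h2 := h1.scomp (0 : ℝ) (hasDerivAt_neg (0 : ℝ))
    unfold HasLineDerivAt
    refine (h2.congr_deriv (by simp)).congr_of_eventuallyEq ?_
    filter_upwards with s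
    simp only [Function.comp]
    congr 1
    module
  · intro y _
    exact hh y

def hker1 (N : ℕ) (t : ℝ) (i : Fin N) (z : Euc N) : ℝ := -(z i) / (2 * t) * hker N t z
def hker2 (N : ℕ) (t : ℝ) (i : Fin N) (z : Euc N) : ℝ :=
  ((z i) ^ 2 / (4 * t ^ 2) - 1 / (2 * t)) * hker N t z

theorem hker1_cont {N : ℕ} (t : ℝ) (i : Fin N) : Continuous (hker1 N t i) := by
  unfold hker1 hker; fun_prop
theorem hker2_cont {N : ℕ} (t : ℝ) (i : Fin N) : Continuous (hker2 N t i) := by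
  unfold hker2 hker; fun_prop

theorem heat_C2 {N : ℕ} {η : Euc N → ℝ} (hη : ContDiff ℝ 2 η) (hc : HasCompactSupport η) :
    C2 N (heatPot N η) := by
  have key := contDiffOn_convolution_right_with_param_comp (𝕜 := ℝ) (μ := (volume : Measure (Euc N)))
    (n := 2) (ContinuousLinearMap.mul ℝ ℝ) (s := QQ N) (v := fun _ => (0 : Euc N)) contDiffOn_const
    (f := fun _ => (1 : ℝ)) (g := fun p z => hker N p.2 (p.1 + z) * η (-z)) (k := (fun z => -z) ⁻¹' tsupport η)
    (QQ_open N) ((Homeomorph.neg (Euc N)).isCompact_preimage.2 hc.isCompact) ?_ (locallyIntegrable_const _) ?_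
  · refine ContDiffOn.congr key ?_
    rintro ⟨x, t⟩ -
    simp [convolution, heatPot_eq, sub_eq_add_neg]
  · intro p z _ hz
    rw [image_eq_zero_of_notMem_tsupport (f := η) hz, mul_zero]
  · have h1 : ContDiffOn ℝ 2 (fun w : (Euc N × ℝ) × Euc N => hker N w.1.2 (w.1.1 + w.2)) (QQ N ×ˢ univ) := by
      refine hker_contDiffOn.comp (f := fun w : (Euc N × ℝ) × Euc N => (w.1.2, w.1.1 + w.2)) (by fun_prop) ?_
      rintro ⟨⟨x, t⟩, z⟩ ⟨⟨-, ht⟩, -⟩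
      exact ⟨ht, mem_univ _⟩
    have h2 : ContDiffOn ℝ 2 (fun w : (Euc N × ℝ) × Euc N => η (-w.2)) (QQ N ×ˢ univ) := by
      fun_prop
    exact h1.mul h2



theorem heat_int {N : ℕ} {f : Euc N → ℝ} (hf : Continuous f) (hc : HasCompactSupport f) (t : ℝ) (x : Euc N) :
    Integrable (fun y => hker N t (x - y) * f y) :=
  Continuous.integrable_of_hasCompactSupport (by have := hker_cont (N := N) t; fun_prop) hc.mul_left

theorem heat_mono {N : ℕ} {f g : Euc N → ℝ} (hf : Continuous f) (hc : HasCompactSupport f)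
    (hg : Continuous g) (hcg : HasCompactSupport g) (h : ∀ x, f x ≤ g x) {t : ℝ} (ht : 0 < t) (x : Euc N) :
    heatPot N f x t ≤ heatPot N g x t := by
  rw [heatPot_eq, heatPot_eq]
  exact integral_mono (heat_int hf hc t x) (heat_int hg hcg t x)
    fun y => mul_le_mul_of_nonneg_left (h y) (hker_pos ht _).le

theorem heat_nonneg {N : ℕ} {f : Euc N → ℝ} (h : ∀ x, 0 ≤ f x) {t : ℝ} (ht : 0 < t) (x : Euc N) :
    0 ≤ heatPot N f x t := by
  rw [heatPot_eq]
  exact integral_nonneg fun y => mul_nonneg (hker_pos ht _).le (h y)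

theorem hker_sub_int {N : ℕ} {t : ℝ} (ht : 0 < t) (x : Euc N) :
    Integrable (fun y => hker N t (x - y)) := (hker_integrable ht).comp_sub_left x

theorem hker_sub_integral {N : ℕ} {t : ℝ} (ht : 0 < t) (x : Euc N) :
    ∫ y, hker N t (x - y) = 1 := by
  rw [integral_sub_left_eq_self (hker N t) volume x, hker_integral ht]

theorem heat_le {N : ℕ} {f : Euc N → ℝ} (hf : Continuous f) (hc : HasCompactSupport f) {M : ℝ}
    (h : ∀ x, f x ≤ M) {t : ℝ} (ht : 0 < t) (x : Euc N) :
    heatPot N f x t ≤ M := by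
  rw [heatPot_eq]
  calc _ ≤ ∫ y, hker N t (x - y) * M := integral_mono (heat_int hf hc t x) ((hker_sub_int ht x).mul_const M)
        fun y => mul_le_mul_of_nonneg_left (h y) (hker_pos ht _).le
    _ = M := by rw [integral_mul_const, hker_sub_integral ht, one_mul]

theorem heat_abs {N : ℕ} {f : Euc N → ℝ} {t : ℝ} (ht : 0 < t) (x : Euc N) :
    |heatPot N f x t| ≤ heatPot N (fun y => |f y|) x t := by
  rw [heatPot_eq, heatPot_eq]
  refine (abs_integral_le_integral_abs).trans (le_of_eq ?_)
  congr 1; ext y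
  rw [abs_mul, abs_of_pos (hker_pos ht _)]

theorem heat_conv {N : ℕ} (f : Euc N → ℝ) (t : ℝ) :
    (fun x => heatPot N f x t) = convolution f (hker N t) (ContinuousLinearMap.mul ℝ ℝ) volume := by
  ext x
  rw [heatPot_eq, convolution]
  congr 1; ext y; simp [mul_comm]

theorem heat_integrable {N : ℕ} {f : Euc N → ℝ} (hf : Continuous f) (hc : HasCompactSupport f) {t : ℝ} (ht : 0 < t) :
    Integrable (fun x => heatPot N f x t) := by
  rw [heat_conv]
  exact (hf.integrable_of_hasCompactSupport hc).integrable_convolution _ (hker_integrable ht)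

theorem heat_integral {N : ℕ} {f : Euc N → ℝ} (hf : Continuous f) (hc : HasCompactSupport f) {t : ℝ} (ht : 0 < t) :
    ∫ x, heatPot N f x t = ∫ x, f x := by
  rw [heat_conv, integral_convolution _ (hf.integrable_of_hasCompactSupport hc) (hker_integrable ht)]
  simp [hker_integral ht]

abbrev ei {N : ℕ} (i : Fin N) : Euc N := EuclideanSpace.single i (1 : ℝ)

def dd {N : ℕ} (i : Fin N) (f : Euc N → ℝ) : Euc N → ℝ := fun y => fderiv ℝ f y (EuclideanSpace.single i 1)

theorem lapl_eq {N : ℕ} (f : Euc N → ℝ) (x : Euc N) : lapl f x = ∑ i, dd i (dd i f) x := rfl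

theorem dd_cont {N : ℕ} {i : Fin N} {f : Euc N → ℝ} (hf : ContDiff ℝ 1 f) : Continuous (dd i f) := by
  unfold dd
  have := hf.continuous_fderiv (by norm_num)
  fun_prop

theorem dd_C1 {N : ℕ} {i : Fin N} {f : Euc N → ℝ} (hf : ContDiff ℝ 2 f) : ContDiff ℝ 1 (dd i f) := by
  unfold dd
  exact (hf.fderiv_right (m := 1) (by norm_num)).clm_apply contDiff_const

theorem dd_supp {N : ℕ} {i : Fin N} {f : Euc N → ℝ} (hf : HasCompactSupport f) : HasCompactSupport (dd i f) :=
  hf.fderiv_apply ℝ _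

theorem dd_line {N : ℕ} {i : Fin N} {f : Euc N → ℝ} (hf : ContDiff ℝ 1 f) (z : Euc N) :
    HasLineDerivAt ℝ f (dd i f z) z (ei i) :=
  ((hf.differentiable (by norm_num)) z).hasFDerivAt.hasLineDerivAt _

theorem dd_unique {N : ℕ} {i : Fin N} {f : Euc N → ℝ} (hf : ContDiff ℝ 1 f) {z : Euc N} {a : ℝ}
    (h : HasLineDerivAt ℝ f a z (ei i)) : dd i f z = a :=
  (dd_line hf z).unique h

theorem heat_di {N : ℕ} {η : Euc N → ℝ} (hη : ContDiff ℝ 2 η) (hc : HasCompactSupport η) {t : ℝ} (ht : 0 < t)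
    (i : Fin N) (x : Euc N) : dd i (fun y => heatPot N η y t) x = ∫ y, hker1 N t i (x - y) * η y :=
  dd_unique (((heat_C2 hη hc).slice ht).of_le (by norm_num))
    (conv_line hη.continuous hc (hker_cont t) (hker1_cont t i) (fun z => hker_line ht z i) x)

theorem heat_di' {N : ℕ} {η : Euc N → ℝ} (hη : ContDiff ℝ 2 η) (hc : HasCompactSupport η) {t : ℝ} (ht : 0 < t)
    (i : Fin N) (x : Euc N) : dd i (fun y => heatPot N η y t) x = heatPot N (dd i η) x t := by
  rw [heat_di hη hc ht, heatPot_eq]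
  exact conv_ibp hη.continuous hc (dd_cont (hη.of_le (by norm_num))) (dd_supp hc) (hker_cont t) (hker1_cont t i)
    (fun z => hker_line ht z i) (dd_line (hη.of_le (by norm_num))) x

theorem heat_dii {N : ℕ} {η : Euc N → ℝ} (hη : ContDiff ℝ 2 η) (hc : HasCompactSupport η) {t : ℝ} (ht : 0 < t)
    (i : Fin N) (x : Euc N) : dd i (dd i (fun y => heatPot N η y t)) x = ∫ y, hker2 N t i (x - y) * η y := by
  refine dd_unique (dd_C1 ((heat_C2 hη hc).slice ht)) ?_
  have := conv_line hη.continuous hc (hker1_cont t i) (hker2_cont t i) (fun z => hker_line2 ht z i) x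
  convert this using 1
  ext x
  exact heat_di hη hc ht i x

theorem heat_dii' {N : ℕ} {η : Euc N → ℝ} (hη : ContDiff ℝ 2 η) (hc : HasCompactSupport η) {t : ℝ} (ht : 0 < t)
    (i : Fin N) (x : Euc N) : dd i (dd i (fun y => heatPot N η y t)) x = heatPot N (dd i (dd i η)) x t := by
  have h1 : ContDiff ℝ 1 (dd i η) := dd_C1 hη
  have h3 : ∀ x, ∫ y, hker1 N t i (x - y) * dd i η y = heatPot N (dd i (dd i η)) x t := by
    intro x
    rw [heatPot_eq]
    exact conv_ibp h1.continuous (dd_supp hc) (dd_cont h1) (dd_supp (dd_supp hc)) (hker_cont t) (hker1_cont t i)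
      (fun z => hker_line ht z i) (dd_line h1) x
  rw [← h3]
  refine dd_unique (dd_C1 ((heat_C2 hη hc).slice ht)) ?_
  have := conv_line h1.continuous (dd_supp hc) (hker_cont t) (hker1_cont t i) (fun z => hker_line ht z i) x
  convert this using 1
  ext x
  exact heat_di' hη hc ht i x

theorem heat_dt {N : ℕ} {η : Euc N → ℝ} (hη : Continuous η) (hc : HasCompactSupport η) {t : ℝ} (ht : 0 < t)
    (x : Euc N) : HasDerivAt (heatPot N η x)
      (∫ y, ((‖x - y‖ ^ 2 / (4 * t ^ 2) - N / (2 * t)) * hker N t (x - y)) * η y) t := by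
  have hpos : ∀ τ ∈ closedBall t (t / 2), 0 < τ := by
    intro τ hτ
    rw [mem_closedBall, Real.dist_eq, abs_le] at hτ
    linarith [hτ.1]
  refine param_deriv hη hc (fun τ y => hker N τ (x - y))
    (fun τ y => (‖x - y‖ ^ 2 / (4 * τ ^ 2) - N / (2 * τ)) * hker N τ (x - y)) t (t / 2) (by positivity) ?_ ?_ ?_
  · intro τ _
    have := hker_cont (N := N) τ
    fun_prop
  · intro τ hτ y
    exact hker_deriv_t (hpos τ hτ) (x - y)
  · have h1 : ContinuousOn (fun p : ℝ × Euc N => hker N p.1 (x - p.2)) (closedBall t (t / 2) ×ˢ univ) := by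
      refine hker_contDiffOn.continuousOn.comp (f := fun p : ℝ × Euc N => (p.1, x - p.2)) (by fun_prop) ?_
      rintro ⟨τ, y⟩ ⟨h, -⟩
      exact ⟨hpos τ h, mem_univ _⟩
    refine ContinuousOn.mul ?_ h1
    refine ContinuousOn.sub (ContinuousOn.div (by fun_prop) (by fun_prop) ?_) (ContinuousOn.div (by fun_prop) (by fun_prop) ?_)
    · rintro ⟨τ, y⟩ ⟨h, -⟩
      have := hpos τ h
      positivity
    · rintro ⟨τ, y⟩ ⟨h, -⟩
      have := hpos τ h
      positivity

theorem heat_eqn {N : ℕ} {η : Euc N → ℝ} (hη : ContDiff ℝ 2 η) (hc : HasCompactSupport η) {t : ℝ} (ht : 0 < t)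
    (x : Euc N) : deriv (heatPot N η x) t = lapl (fun y => heatPot N η y t) x := by
  rw [(heat_dt hη.continuous hc ht x).deriv, lapl_eq]
  simp_rw [heat_dii hη hc ht]
  rw [← integral_finsetSum]
  · congr 1; ext y
    rw [← Finset.sum_mul, ← hker_lap ht]
    rfl
  · intro i _
    have := hker2_cont t i
    have := hη.continuous
    exact Continuous.integrable_of_hasCompactSupport (by fun_prop) hc.mul_left

theorem abs_dd_le {N : ℕ} (i : Fin N) (f : Euc N → ℝ) (x : Euc N) : |dd i f x| ≤ ‖fderiv ℝ f x‖ := by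
  have := (fderiv ℝ f x).le_opNorm (ei i)
  simpa [dd, ei] using this

theorem norm_fd_le {N : ℕ} (f : Euc N → ℝ) (x : Euc N) : ‖fderiv ℝ f x‖ ≤ ∑ i, |dd i f x| := by
  refine ContinuousLinearMap.opNorm_le_bound _ (Finset.sum_nonneg fun _ _ => abs_nonneg _) fun z => ?_
  have hz : z = ∑ i, z i • ei i := by
    ext j
    simp [ei, Finset.sum_apply, Pi.single_apply]
  conv_lhs => rw [hz]
  rw [map_sum, Finset.sum_mul]
  refine (norm_sum_le _ _).trans (Finset.sum_le_sum fun i _ => ?_)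
  rw [map_smul, smul_eq_mul, norm_mul, mul_comm]
  gcongr
  · exact le_rfl
  · exact PiLp.norm_apply_le z i

theorem heat_di_large {N : ℕ} {η : Euc N → ℝ} (hη : ContDiff ℝ 2 η) (hc : HasCompactSupport η) (h0 : ∀ x, 0 ≤ η x)
    {t : ℝ} (ht : 0 < t) (i : Fin N) (x : Euc N) :
    |dd i (fun y => heatPot N η y t) x| ≤ 3 * (2 : ℝ) ^ ((N : ℝ) / 2) / √t * heatPot N η x (2 * t) := by
  rw [heat_di hη hc ht, heatPot_eq, ← integral_const_mul]
  refine abs_integral_le_integral_abs.trans ?_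
  refine integral_mono (Continuous.integrable_of_hasCompactSupport ?_ ?_) ((heat_int hη.continuous hc _ _).const_mul _) fun y => ?_
  · have := hker1_cont t i
    have := hη.continuous
    fun_prop
  · exact (hc.mul_left).abs
  · simp only [hker1]
    rw [abs_mul, abs_of_nonneg (h0 y), ← mul_assoc]
    refine mul_le_mul_of_nonneg_right ?_ (h0 y)
    rw [abs_mul, abs_of_pos (hker_pos ht _), abs_div, abs_neg, abs_of_pos (show 0 < 2 * t by positivity)]
    have h1 := norm_mul_ker_le ht (x - y)
    have h2 : |(x - y) i| ≤ ‖x - y‖ := PiLp.norm_apply_le (x - y) i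
    have h3 := hker_pos ht (x - y)
    have h4 := hker_pos (show 0 < 2 * t by positivity) (x - y)
    have hs : √t * √t = t := Real.mul_self_sqrt ht.le
    have hs0 : 0 < √t := Real.sqrt_pos.2 ht
    calc |(x - y) i| / (2 * t) * hker N t (x - y) ≤ ‖x - y‖ / t * hker N t (x - y) := by
          gcongr ?_ * _
          apply div_le_div₀ (norm_nonneg _) h2 ht (by linarith)
      _ = (‖x - y‖ * hker N t (x - y)) / t := by ring
      _ ≤ (3 * (2 : ℝ) ^ ((N : ℝ) / 2) * √t * hker N (2 * t) (x - y)) / t := by gcongr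
      _ = _ := by
          rw [div_mul_eq_mul_div, div_eq_div_iff ht.ne' hs0.ne']
          linear_combination (3 * (2 : ℝ) ^ ((N : ℝ) / 2) * hker N (2 * t) (x - y)) * hs

theorem heat_dt_large {N : ℕ} {η : Euc N → ℝ} (hη : ContDiff ℝ 2 η) (hc : HasCompactSupport η) (h0 : ∀ x, 0 ≤ η x)
    {t : ℝ} (ht : 0 < t) (x : Euc N) :
    |deriv (heatPot N η x) t| ≤ ((2 + N) * (2 : ℝ) ^ ((N : ℝ) / 2)) / t * heatPot N η x (2 * t) := by
  rw [(heat_dt hη.continuous hc ht x).deriv, heatPot_eq, ← integral_const_mul]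
  refine abs_integral_le_integral_abs.trans ?_
  refine integral_mono (Continuous.integrable_of_hasCompactSupport ?_ ?_) ((heat_int hη.continuous hc _ _).const_mul _) fun y => ?_
  · have := hker_cont (N := N) t
    have := hη.continuous
    fun_prop
  · exact (hc.mul_left).abs
  · simp only
    rw [abs_mul, abs_of_nonneg (h0 y), ← mul_assoc]
    refine mul_le_mul_of_nonneg_right ?_ (h0 y)
    rw [abs_mul, abs_of_pos (hker_pos ht _)]
    have h1 := normsq_mul_ker_le ht (x - y)
    have h2 := hker_le_two ht (x - y)
    have h3 := hker_pos ht (x - y)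
    have h4 := hker_pos (show 0 < 2 * t by positivity) (x - y)
    have h5 : |‖x - y‖ ^ 2 / (4 * t ^ 2) - N / (2 * t)| ≤ ‖x - y‖ ^ 2 / (4 * t ^ 2) + N / (2 * t) := by
      refine (abs_sub _ _).trans (le_of_eq ?_)
      rw [abs_of_nonneg (by positivity), abs_of_nonneg (by positivity)]
    calc _ ≤ (‖x - y‖ ^ 2 / (4 * t ^ 2) + N / (2 * t)) * hker N t (x - y) := by gcongr
      _ = (‖x - y‖ ^ 2 * hker N t (x - y)) / (4 * t ^ 2) + N / (2 * t) * hker N t (x - y) := by ring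
      _ ≤ (8 * (2 : ℝ) ^ ((N : ℝ) / 2) * t * hker N (2 * t) (x - y)) / (4 * t ^ 2) +
          N / (2 * t) * ((2 : ℝ) ^ ((N : ℝ) / 2) * hker N (2 * t) (x - y)) := by gcongr
      _ = ((2 + N / 2) * (2 : ℝ) ^ ((N : ℝ) / 2)) / t * hker N (2 * t) (x - y) := by field_simp; ring
      _ ≤ _ := by
        gcongr
        have : (0 : ℝ) ≤ N := by positivity
        linarith


def RR (N : ℕ) (η : Euc N → ℝ) (x : Euc N) (t : ℝ) : ℝ :=
  ‖fderiv ℝ (fun y => heatPot N η y t) x‖ ^ 2 + |deriv (fun τ => heatPot N η x τ) t|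

theorem RR_nonneg {N : ℕ} (η : Euc N → ℝ) (x : Euc N) (t : ℝ) : 0 ≤ RR N η x t := by
  unfold RR; positivity

theorem RR_cont {N : ℕ} {η : Euc N → ℝ} (hη : ContDiff ℝ 2 η) (hc : HasCompactSupport η) :
    ContinuousOn (fun p : Euc N × ℝ => RR N η p.1 p.2) (QQ N) :=
  (((heat_C2 hη hc).cont_fderiv).norm.pow 2).add ((heat_C2 hη hc).cont_dt.abs)

theorem RRp_cont {N : ℕ} {η : Euc N → ℝ} (hη : ContDiff ℝ 2 η) (hc : HasCompactSupport η) {p : ℝ} (hp : 1 < p) :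
    ContinuousOn (fun z : Euc N × ℝ => RR N η z.1 z.2 ^ p) (QQ N) :=
  (RR_cont hη hc).rpow_const fun _ _ => Or.inr (by linarith)

theorem RRp_cont_x {N : ℕ} {η : Euc N → ℝ} (hη : ContDiff ℝ 2 η) (hc : HasCompactSupport η) {p : ℝ} (hp : 1 < p)
    {t : ℝ} (ht : 0 < t) : Continuous (fun x => RR N η x t ^ p) := by
  rw [← continuousOn_univ]
  exact (RRp_cont hη hc hp).comp (f := fun x => (x, t)) (by fun_prop) fun x _ => ⟨mem_univ _, ht⟩

theorem rpow_bd {a b D h p : ℝ} (hp : 1 < p) (ha : 0 ≤ a) (hD : 0 ≤ D) (hh : 0 ≤ h) (hhb : h ≤ b) (hab : a ≤ D * h) :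
    a ^ p ≤ D ^ p * b ^ (p - 1) * h := by
  calc a ^ p ≤ (D * h) ^ p := by gcongr
    _ = D ^ p * h ^ p := Real.mul_rpow hD hh
    _ = D ^ p * (h ^ (p - 1) * h) := by
        rcases hh.eq_or_lt with rfl | h0
        · rw [Real.zero_rpow (by linarith)]; simp
        · rw [Real.rpow_sub_one h0.ne']; field_simp
    _ ≤ D ^ p * (b ^ (p - 1) * h) := by gcongr
    _ = _ := by ring

theorem RR_small {N : ℕ} {η : Euc N → ℝ} (hη : ContDiff ℝ 2 η) (hc : HasCompactSupport η) {p : ℝ} (hp : 1 < p) :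
    ∃ D : ℝ, 0 ≤ D ∧ ∃ g : Euc N → ℝ, Continuous g ∧ HasCompactSupport g ∧
      ∀ t, 0 < t → ∀ x, RR N η x t ^ p ≤ D * heatPot N g x t := by
  let g : Euc N → ℝ := fun x => ∑ i : Fin N, (|dd i η x| + |dd i (dd i η) x|)
  have c1 : ∀ i : Fin N, Continuous (fun x => |dd i η x|) := fun i => (dd_C1 hη).continuous.abs
  have c2 : ∀ i : Fin N, Continuous (fun x => |dd i (dd i η) x|) := fun i => (dd_cont (dd_C1 hη)).abs
  have s1 : ∀ i : Fin N, HasCompactSupport (fun x => |dd i η x|) := fun i => (dd_supp hc).abs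
  have s2 : ∀ i : Fin N, HasCompactSupport (fun x => |dd i (dd i η) x|) := fun i => (dd_supp (dd_supp hc)).abs
  have hgc : Continuous g := continuous_finsetSum _ fun i _ => (c1 i).add (c2 i)
  have hg0 : ∀ x, 0 ≤ g x := fun x => Finset.sum_nonneg fun i _ => by positivity
  have hgs : HasCompactSupport g := by
    refine HasCompactSupport.of_support_subset_isCompact hc.isCompact fun x hx => ?_
    by_contra hx'
    apply hx
    have h1 : ∀ i, dd i η x = 0 := fun i => by
      by_contra h
      exact hx' (tsupport_fderiv_apply_subset ℝ _ (subset_tsupport _ h))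
    have h2 : ∀ i, dd i (dd i η) x = 0 := fun i => by
      by_contra h
      exact hx' (tsupport_fderiv_apply_subset ℝ _ (tsupport_fderiv_apply_subset ℝ _ (subset_tsupport _ h)))
    simp [g, h1, h2]
  obtain ⟨M, hM⟩ := hgs.exists_bound_of_continuous hgc
  have hM0 : 0 ≤ M := (norm_nonneg _).trans (hM 0)
  refine ⟨(M + 1) ^ p * M ^ (p - 1), by positivity, g, hgc, hgs, fun t ht x => ?_⟩
  have hH0 := heat_nonneg hg0 ht x
  have hHM := heat_le hgc hgs (fun y => (le_abs_self _).trans (hM y)) ht x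
  have hsum : heatPot N g x t = ∑ i : Fin N, (heatPot N (fun x => |dd i η x|) x t + heatPot N (fun x => |dd i (dd i η) x|) x t) := by
    simp only [heatPot_eq, g]
    simp_rw [Finset.mul_sum, mul_add]
    refine (integral_finsetSum _ fun i _ => (heat_int (c1 i) (s1 i) t x).add (heat_int (c2 i) (s2 i) t x)).trans ?_
    exact Finset.sum_congr rfl fun i _ => integral_add (heat_int (c1 i) (s1 i) t x) (heat_int (c2 i) (s2 i) t x)
  have h1 : ‖fderiv ℝ (fun y => heatPot N η y t) x‖ ≤ heatPot N g x t := by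
    refine (norm_fd_le _ _).trans ?_
    rw [hsum]
    refine Finset.sum_le_sum fun i _ => ?_
    rw [heat_di' hη hc ht]
    have := heat_nonneg (f := fun x => |dd i (dd i η) x|) (fun x => abs_nonneg _) ht x
    linarith [heat_abs (f := dd i η) ht x]
  have h2 : |deriv (fun τ => heatPot N η x τ) t| ≤ heatPot N g x t := by
    rw [show deriv (fun τ => heatPot N η x τ) t = _ from heat_eqn hη hc ht x, lapl_eq, hsum]
    refine (Finset.abs_sum_le_sum_abs _ _).trans (Finset.sum_le_sum fun i _ => ?_)
    rw [heat_dii' hη hc ht]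
    have := heat_nonneg (f := fun x => |dd i η x|) (fun x => abs_nonneg _) ht x
    linarith [heat_abs (f := dd i (dd i η)) ht x]
  refine rpow_bd hp (RR_nonneg η x t) (by positivity) hH0 hHM ?_
  unfold RR
  have : ‖fderiv ℝ (fun y => heatPot N η y t) x‖ ^ 2 ≤ M * heatPot N g x t := by
    rw [sq]
    exact mul_le_mul (h1.trans hHM) h1 (norm_nonneg _) hM0
  linarith

theorem RR_large {N : ℕ} {η : Euc N → ℝ} (hη : ContDiff ℝ 2 η) (hc : HasCompactSupport η)
    (h01 : ∀ x, 0 ≤ η x ∧ η x ≤ 1) {p : ℝ} (hp : 1 < p) :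
    ∃ D : ℝ, 0 ≤ D ∧ ∀ t, 0 < t → ∀ x, RR N η x t ^ p ≤ D * t ^ (-p) * heatPot N η x (2 * t) := by
  let A : ℝ := N * (3 * (2 : ℝ) ^ ((N : ℝ) / 2))
  let B : ℝ := (2 + N) * (2 : ℝ) ^ ((N : ℝ) / 2)
  have hA : 0 ≤ A := by positivity
  have hB : 0 ≤ B := by positivity
  refine ⟨(A ^ 2 + B) ^ p, by positivity, fun t ht x => ?_⟩
  have h2t : 0 < 2 * t := by positivity
  have hH0 := heat_nonneg (fun x => (h01 x).1) h2t x
  have hH1 := heat_le hη.continuous hc (fun x => (h01 x).2) h2t x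
  set H := heatPot N η x (2 * t)
  have hs0 : 0 < √t := Real.sqrt_pos.2 ht
  have h1 : ‖fderiv ℝ (fun y => heatPot N η y t) x‖ ≤ A / √t * H := by
    refine (norm_fd_le _ _).trans ?_
    refine (Finset.sum_le_sum fun i _ => heat_di_large hη hc (fun x => (h01 x).1) ht i x).trans (le_of_eq ?_)
    simp [A, H]
    ring
  have h2 : |deriv (fun τ => heatPot N η x τ) t| ≤ B / t * H := heat_dt_large hη hc (fun x => (h01 x).1) ht x
  have h3 : RR N η x t ≤ (A ^ 2 + B) / t * H := by
    unfold RR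
    have : ‖fderiv ℝ (fun y => heatPot N η y t) x‖ ^ 2 ≤ (A / √t * H) ^ 2 := by gcongr
    have h4 : (A / √t * H) ^ 2 = A ^ 2 / t * (H * H) := by
      rw [mul_pow, div_pow, Real.sq_sqrt ht.le]; ring
    have h5 : A ^ 2 / t * (H * H) ≤ A ^ 2 / t * H := by
      gcongr
      exact mul_le_of_le_one_left hH0 hH1
    have h6 : (A ^ 2 + B) / t * H = A ^ 2 / t * H + B / t * H := by ring
    linarith
  have := rpow_bd hp (RR_nonneg η x t) (by positivity) hH0 hH1 h3
  rw [Real.one_rpow, mul_one, Real.div_rpow (by positivity) ht.le] at this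
  rw [Real.rpow_neg ht.le, ← div_eq_mul_inv]
  exact this

theorem RRp_int_x {N : ℕ} {η : Euc N → ℝ} (hη : ContDiff ℝ 2 η) (hc : HasCompactSupport η) {p : ℝ} (hp : 1 < p)
    {t : ℝ} (ht : 0 < t) : Integrable (fun x => RR N η x t ^ p) := by
  obtain ⟨D, hD, g, hg, hgs, h⟩ := RR_small hη hc hp
  refine ((heat_integrable hg hgs ht).const_mul D).mono' (RRp_cont_x hη hc hp ht).aestronglyMeasurable ?_
  filter_upwards with x
  rw [Real.norm_eq_abs, abs_of_nonneg (Real.rpow_nonneg (RR_nonneg η x t) _)]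
  exact h t ht x

theorem RRp_int_t {N : ℕ} {η : Euc N → ℝ} (hη : ContDiff ℝ 2 η) (hc : HasCompactSupport η)
    (h01 : ∀ x, 0 ≤ η x ∧ η x ≤ 1) {p : ℝ} (hp : 1 < p) :
    IntegrableOn (fun t => ∫ x, RR N η x t ^ p) (Ioi 0) := by
  obtain ⟨D, hD, g, hg, hgs, h⟩ := RR_small hη hc hp
  obtain ⟨D2, hD2, h2⟩ := RR_large hη hc h01 hp
  have hmeas : AEStronglyMeasurable (fun t => ∫ x, RR N η x t ^ p) (volume.restrict (Ioi 0)) := by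
    have h1 : AEStronglyMeasurable (fun z : ℝ × Euc N => RR N η z.2 z.1 ^ p)
        ((volume.restrict (Ioi 0)).prod (volume : Measure (Euc N))) := by
      have h3 : ContinuousOn (fun z : ℝ × Euc N => RR N η z.2 z.1 ^ p) (Ioi 0 ×ˢ univ) :=
        (RRp_cont hη hc hp).comp (f := fun z : ℝ × Euc N => (z.2, z.1)) (by fun_prop) fun z hz => ⟨mem_univ _, hz.1⟩
      have := h3.aestronglyMeasurable (μ := (volume : Measure ℝ).prod (volume : Measure (Euc N)))
        (measurableSet_Ioi.prod MeasurableSet.univ)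
      rwa [← Measure.prod_restrict, Measure.restrict_univ] at this
    exact h1.integral_prod_right'
  have n0 : ∀ t, 0 ≤ ∫ x, RR N η x t ^ p := fun t => integral_nonneg fun x => Real.rpow_nonneg (RR_nonneg η x t) _
  rw [← Ioc_union_Ioi_eq_Ioi zero_le_one]
  refine IntegrableOn.union ?_ ?_
  · refine Integrable.mono' (g := fun _ => D * ∫ x, g x) (integrableOn_const (by simp)) (hmeas.mono_measure (Measure.restrict_mono Ioc_subset_Ioi_self le_rfl)) ?_
    filter_upwards [ae_restrict_mem measurableSet_Ioc] with t ht
    rw [Real.norm_eq_abs, abs_of_nonneg (n0 t), ← heat_integral hg hgs ht.1, ← integral_const_mul]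
    exact integral_mono (RRp_int_x hη hc hp ht.1) ((heat_integrable hg hgs ht.1).const_mul D) (h t ht.1)
  · refine Integrable.mono' (g := fun t => (D2 * ∫ x, η x) * t ^ (-p))
      ((integrableOn_Ioi_rpow_of_lt (by linarith) one_pos).const_mul _)
      (hmeas.mono_measure (Measure.restrict_mono (Ioi_subset_Ioi zero_le_one) le_rfl)) ?_
    filter_upwards [ae_restrict_mem measurableSet_Ioi] with t ht
    have ht0 : 0 < t := lt_trans one_pos ht
    have h2t : 0 < 2 * t := by positivity
    rw [Real.norm_eq_abs, abs_of_nonneg (n0 t), ← heat_integral hη.continuous hc h2t]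
    rw [show ∀ a, D2 * a * t ^ (-p) = D2 * t ^ (-p) * a by intro a; ring, ← integral_const_mul]
    exact integral_mono (RRp_int_x hη hc hp ht0) ((heat_integrable hη.continuous hc h2t).const_mul _) (h2 t ht0)

theorem Rnorm_eq {N : ℕ} (q : ℝ) (η : Euc N → ℝ) :
    Rnorm N q η = ∫ t in Ioi (0 : ℝ), ∫ x, RR N η x t ^ (q / (q - 1)) := rfl

/-- The heat potential is bounded away from `1` outside the paraboloid. -/
theorem heat_gap {N : ℕ} (hN : 1 ≤ N) : ∃ c : ℝ, 0 < c ∧ c ≤ 1 ∧ ∀ (R : ℝ) (η : Euc N → ℝ), 0 < R → Continuous η →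
    HasCompactSupport η → tsupport η ⊆ ball 0 R → (∀ x, 0 ≤ η x ∧ η x ≤ 1) → ∀ x t, 0 < t →
    R ^ 2 ≤ ‖x‖ ^ 2 + t → c ≤ 1 - heatPot N η x t := by
  let c0 : ℝ := (4 * π) ^ (-(N : ℝ) / 2) * Real.exp (-(9 / 4)) * (volume : Measure (Euc N)).real (ball 0 1)
  have hv : 0 < (volume : Measure (Euc N)).real (ball 0 1) :=
    ENNReal.toReal_pos (measure_ball_pos _ _ one_pos).ne' measure_ball_lt_top.ne
  have hc0 : 0 < c0 := by positivity
  refine ⟨min c0 1, by positivity, min_le_right _ _, fun R η hR hη hc hs h01 x t ht hx => ?_⟩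
  refine (min_le_left _ _).trans ?_
  have hst : 0 < √t := Real.sqrt_pos.2 ht
  have hst2 : √t ^ 2 = t := Real.sq_sqrt ht.le
  obtain ⟨e, he, hxe⟩ : ∃ e : Euc N, ‖e‖ = 1 ∧ x = ‖x‖ • e := by
    by_cases h : x = 0
    · exact ⟨EuclideanSpace.single ⟨0, hN⟩ 1, by simp, by simp [h]⟩
    · have : ‖x‖ ≠ 0 := norm_ne_zero_iff.2 h
      exact ⟨‖x‖⁻¹ • x, by rw [norm_smul]; simp [this], by rw [smul_smul, mul_inv_cancel₀ this, one_smul]⟩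
  have hxc : ‖x + (2 * √t) • e‖ = ‖x‖ + 2 * √t := by
    have : x + (2 * √t) • e = (‖x‖ + 2 * √t) • e := by rw [add_smul, ← hxe]
    rw [this, norm_smul, he, mul_one, Real.norm_eq_abs, abs_of_nonneg (by positivity)]
  set z := x + (2 * √t) • e with hz
  have hzx : ‖x - z‖ = 2 * √t := by
    rw [hz, sub_add_cancel_left, norm_neg, norm_smul, he, mul_one, Real.norm_eq_abs, abs_of_nonneg (by positivity)]
  have hS : ∀ y ∈ ball z √t, η y = 0 ∧ (4 * π * t) ^ (-(N : ℝ) / 2) * Real.exp (-(9 / 4)) ≤ hker N t (x - y) := by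
    intro y hy
    rw [mem_ball, dist_eq_norm] at hy
    have h1 : ‖z‖ ≤ ‖y‖ + ‖y - z‖ := by
      have := norm_sub_le y (y - z); simpa using this
    have h2 : ‖x - y‖ ≤ ‖x - z‖ + ‖y - z‖ := by
      have := norm_sub_le (x - z) (y - z); simpa using this
    constructor
    · by_contra h
      have := hs (subset_tsupport _ h)
      rw [mem_ball_zero_iff] at this
      have : ‖x‖ + √t < R := by linarith
      nlinarith [norm_nonneg x]
    · unfold hker
      gcongr
      rw [neg_div, neg_le_neg_iff, div_le_iff₀ (by positivity)]
      have : ‖x - y‖ ≤ 3 * √t := by linarith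
      nlinarith [norm_nonneg (x - y)]
  have h1 : 1 - heatPot N η x t = ∫ y, hker N t (x - y) * (1 - η y) := by
    simp_rw [mul_sub]
    rw [integral_sub ((hker_sub_int ht x).mul_const _) (heat_int hη hc t x), integral_mul_const,
      hker_sub_integral ht, one_mul, heatPot_eq]
  have hint : Integrable (fun y => hker N t (x - y) * (1 - η y)) := by
    simp_rw [mul_sub]
    exact ((hker_sub_int ht x).mul_const _).sub (heat_int hη hc t x)
  have h2 : ∫ y in ball z √t, hker N t (x - y) * (1 - η y) ≤ ∫ y, hker N t (x - y) * (1 - η y) :=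
    setIntegral_le_integral hint (Eventually.of_forall fun y => mul_nonneg (hker_pos ht _).le (by linarith [(h01 y).2]))
  have h3 : ∫ y in ball z √t, (4 * π * t) ^ (-(N : ℝ) / 2) * Real.exp (-(9 / 4)) ≤
      ∫ y in ball z √t, hker N t (x - y) * (1 - η y) := by
    refine setIntegral_mono_on (integrableOn_const measure_ball_lt_top.ne) hint.integrableOn measurableSet_ball fun y hy => ?_
    rw [(hS y hy).1, sub_zero, mul_one]
    exact (hS y hy).2
  rw [h1]
  refine le_trans (le_of_eq ?_) (h3.trans h2)
  rw [setIntegral_const, smul_eq_mul, measureReal_def, Measure.addHaar_ball_of_pos _ _ hst, finrank_euclideanSpace, Fintype.card_fin, ENNReal.toReal_mul,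
    ENNReal.toReal_ofReal (by positivity), ← measureReal_def, Real.mul_rpow (by positivity) ht.le]
  have h4 : √t ^ N * t ^ (-(N : ℝ) / 2) = 1 := by
    rw [← Real.rpow_natCast, Real.sqrt_eq_rpow, ← Real.rpow_mul ht.le, ← Real.rpow_add ht]
    ring_nf
    simp
  simp only [c0]
  linear_combination (-(4 * π) ^ (-(N : ℝ) / 2) * Real.exp (-(9 / 4)) * (volume : Measure (Euc N)).real (ball 0 1)) * h4

theorem heat_unif {N : ℕ} {η : Euc N → ℝ} (hη : ContDiff ℝ 2 η) (hc : HasCompactSupport η) :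
    ∃ C : ℝ, 0 ≤ C ∧ ∀ x t, 0 < t → |heatPot N η x t - η x| ≤ C * √t := by
  obtain ⟨L, hL⟩ := ContDiff.lipschitzWith_of_hasCompactSupport hc hη (by norm_num)
  refine ⟨L * (3 * (2 : ℝ) ^ ((N : ℝ) / 2)), by positivity, fun x t ht => ?_⟩
  have h1 : heatPot N η x t - η x = ∫ y, hker N t (x - y) * (η y - η x) := by
    simp_rw [mul_sub]
    rw [integral_sub (heat_int hη.continuous hc t x) ((hker_sub_int ht x).mul_const _), integral_mul_const,
      hker_sub_integral ht, one_mul, heatPot_eq]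
  have h2t : 0 < 2 * t := by positivity
  rw [h1]
  calc |∫ y, hker N t (x - y) * (η y - η x)| ≤ ∫ y, (L : ℝ) * (3 * (2 : ℝ) ^ ((N : ℝ) / 2) * √t * hker N (2 * t) (x - y)) := by
        rw [← Real.norm_eq_abs]
        refine norm_integral_le_of_norm_le (((hker_sub_int h2t x).const_mul _).const_mul _) ?_
        filter_upwards with y
        have h3 := hL.dist_le_mul y x
        rw [Real.dist_eq, dist_comm, dist_eq_norm] at h3
        rw [norm_mul, Real.norm_eq_abs, abs_of_pos (hker_pos ht _), Real.norm_eq_abs]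
        calc _ ≤ hker N t (x - y) * (L * ‖x - y‖) := by have := hker_pos ht (x - y); gcongr
          _ = L * (‖x - y‖ * hker N t (x - y)) := by ring
          _ ≤ _ := mul_le_mul_of_nonneg_left (norm_mul_ker_le ht _) L.2
    _ = _ := by
        rw [integral_const_mul, integral_const_mul, hker_sub_integral h2t]; ring


def pp (m s : ℝ) : ℝ := (max s 0) ^ m

theorem pp_nonneg (m s : ℝ) : 0 ≤ pp m s := Real.rpow_nonneg (le_max_right _ _) _

theorem pp_of_nonpos {m s : ℝ} (hm : 0 < m) (hs : s ≤ 0) : pp m s = 0 := by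
  unfold pp; rw [max_eq_right hs, Real.zero_rpow hm.ne']

theorem pp_cont {m : ℝ} (hm : 0 < m) : Continuous (pp m) := by
  unfold pp
  exact (continuous_id.max continuous_const).rpow_const fun x => Or.inr hm.le

theorem pp_deriv {m : ℝ} (hm : 1 < m) (s : ℝ) : HasDerivAt (pp m) (m * pp (m - 1) s) s := by
  rcases lt_trichotomy s 0 with h | rfl | h
  · rw [pp_of_nonpos (by linarith) h.le, mul_zero]
    refine (hasDerivAt_const s (0 : ℝ)).congr_of_eventuallyEq ?_
    filter_upwards [Iio_mem_nhds h] with y hy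
    exact pp_of_nonpos (by linarith) (le_of_lt hy)
  · rw [pp_of_nonpos (by linarith) le_rfl, mul_zero]
    have h1 : HasDerivAt (fun x : ℝ => |x| ^ m) 0 0 := by
      have := hasDerivAt_abs_rpow (0 : ℝ) hm
      simpa using this
    rw [hasDerivAt_iff_isLittleO] at h1 ⊢
    simp only [abs_zero, smul_zero, sub_zero] at h1 ⊢
    rw [pp_of_nonpos (by linarith) le_rfl]
    rw [Real.zero_rpow (by linarith)] at h1
    simp only [sub_zero] at h1 ⊢
    refine (Asymptotics.isBigO_of_le _ fun x => ?_).trans_isLittleO h1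
    rw [Real.norm_eq_abs, Real.norm_eq_abs, abs_of_nonneg (pp_nonneg _ _), abs_of_nonneg (by positivity)]
    unfold pp
    exact Real.rpow_le_rpow (le_max_right _ _) (max_le (le_abs_self _) (abs_nonneg _)) (by linarith)
  · have h1 := Real.hasDerivAt_rpow_const (x := s) (p := m) (Or.inl h.ne')
    have h2 : pp (m - 1) s = s ^ (m - 1) := by unfold pp; rw [max_eq_left h.le]
    rw [h2]
    refine h1.congr_of_eventuallyEq ?_
    filter_upwards [Ioi_mem_nhds h] with y hy
    unfold pp; rw [max_eq_left (le_of_lt hy)]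

theorem pp_C1 {m : ℝ} (hm : 1 < m) : ContDiff ℝ 1 (pp m) := by
  rw [contDiff_one_iff_deriv]
  refine ⟨fun s => (pp_deriv hm s).differentiableAt, ?_⟩
  have : deriv (pp m) = fun s => m * pp (m - 1) s := funext fun s => (pp_deriv hm s).deriv
  rw [this]
  exact continuous_const.mul (pp_cont (by linarith))

theorem pp_C2 {m : ℝ} (hm : 2 < m) : ContDiff ℝ 2 (pp m) := by
  rw [show (2 : WithTop ℕ∞) = 1 + 1 by norm_num, contDiff_succ_iff_deriv]
  refine ⟨fun s => (pp_deriv (by linarith) s).differentiableAt, by simp, ?_⟩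
  have : deriv (pp m) = fun s => m * pp (m - 1) s := funext fun s => (pp_deriv (by linarith) s).deriv
  rw [this]
  exact contDiff_const.mul (pp_C1 (by linarith))

theorem dd_eq_of_hasFDerivAt {N : ℕ} {i : Fin N} {f : Euc N → ℝ} {L : Euc N →L[ℝ] ℝ} {x : Euc N}
    (h : HasFDerivAt f L x) : dd i f x = L (ei i) := by
  unfold dd; rw [h.fderiv]

theorem dd_mul {N : ℕ} {i : Fin N} {f g : Euc N → ℝ} (hf : ContDiff ℝ 1 f) (hg : ContDiff ℝ 1 g) :
    dd i (fun x => f x * g x) = fun x => dd i f x * g x + f x * dd i g x := by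
  funext x
  have h1 := (hf.differentiable (by norm_num) x).hasFDerivAt
  have h2 := (hg.differentiable (by norm_num) x).hasFDerivAt
  refine (dd_eq_of_hasFDerivAt (h1.mul h2)).trans ?_
  rw [dd_eq_of_hasFDerivAt h1, dd_eq_of_hasFDerivAt h2]
  simp; ring

theorem dd_add {N : ℕ} {i : Fin N} {f g : Euc N → ℝ} (hf : ContDiff ℝ 1 f) (hg : ContDiff ℝ 1 g) :
    dd i (fun x => f x + g x) = fun x => dd i f x + dd i g x := by
  funext x
  have h1 := (hf.differentiable (by norm_num) x).hasFDerivAt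
  have h2 := (hg.differentiable (by norm_num) x).hasFDerivAt
  refine (dd_eq_of_hasFDerivAt (h1.add h2)).trans ?_
  rw [dd_eq_of_hasFDerivAt h1, dd_eq_of_hasFDerivAt h2]
  simp

theorem dd_const_mul {N : ℕ} {i : Fin N} {f : Euc N → ℝ} (c : ℝ) (hf : ContDiff ℝ 1 f) :
    dd i (fun x => c * f x) = fun x => c * dd i f x := by
  funext x
  have h1 := (hf.differentiable (by norm_num) x).hasFDerivAt
  rw [dd_eq_of_hasFDerivAt (h1.const_mul c), dd_eq_of_hasFDerivAt h1]
  simp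

theorem dd_const_sub {N : ℕ} {i : Fin N} {f : Euc N → ℝ} (c : ℝ) (hf : ContDiff ℝ 1 f) :
    dd i (fun x => c - f x) = fun x => -dd i f x := by
  funext x
  have h1 := (hf.differentiable (by norm_num) x).hasFDerivAt
  rw [dd_eq_of_hasFDerivAt (h1.const_sub c), dd_eq_of_hasFDerivAt h1]
  simp

theorem dd_sub_const {N : ℕ} {i : Fin N} {f : Euc N → ℝ} (c : ℝ) (hf : ContDiff ℝ 1 f) :
    dd i (fun x => f x - c) = dd i f := by
  funext x
  have h1 := (hf.differentiable (by norm_num) x).hasFDerivAt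
  rw [dd_eq_of_hasFDerivAt (h1.sub_const c), dd_eq_of_hasFDerivAt h1]

theorem dd_comp {N : ℕ} {i : Fin N} {f : Euc N → ℝ} {g g' : ℝ → ℝ} (hf : ContDiff ℝ 1 f)
    (hg : ∀ s, HasDerivAt g (g' s) s) :
    dd i (fun x => g (f x)) = fun x => g' (f x) * dd i f x := by
  funext x
  have h1 := (hf.differentiable (by norm_num) x).hasFDerivAt
  refine (dd_eq_of_hasFDerivAt ((hg (f x)).comp_hasFDerivAt x h1)).trans ?_
  rw [dd_eq_of_hasFDerivAt h1]
  simp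

/-- The spatial weight. -/
def wt (N : ℕ) (ε : ℝ) (k : ℕ) (x : Euc N) : ℝ := ((1 + ε * ‖x‖ ^ 2) ^ k)⁻¹

theorem wt_base {N : ℕ} {ε : ℝ} (hε : 0 < ε) (x : Euc N) : 1 ≤ 1 + ε * ‖x‖ ^ 2 := by
  have : 0 ≤ ε * ‖x‖ ^ 2 := by positivity
  linarith

theorem wt_pos {N : ℕ} {ε : ℝ} (hε : 0 < ε) (k : ℕ) (x : Euc N) : 0 < wt N ε k x := by
  have := wt_base hε x
  unfold wt; positivity

theorem wt_le_one {N : ℕ} {ε : ℝ} (hε : 0 < ε) (k : ℕ) (x : Euc N) : wt N ε k x ≤ 1 := by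
  have := wt_base hε x
  unfold wt
  exact inv_le_one_of_one_le₀ (one_le_pow₀ this)

theorem wt_succ {N : ℕ} {ε : ℝ} (hε : 0 < ε) (k : ℕ) (x : Euc N) :
    (1 + ε * ‖x‖ ^ 2) * wt N ε (k + 1) x = wt N ε k x := by
  have := wt_base hε x
  unfold wt
  field_simp
  ring

theorem wt_contDiff {N : ℕ} {ε : ℝ} (hε : 0 < ε) (k : ℕ) : ContDiff ℝ 2 (wt N ε k) := by
  unfold wt
  refine ContDiff.inv ?_ fun x => ?_
  · have := contDiff_norm_sq ℝ (E := Euc N) (n := 2)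
    fun_prop
  · have := wt_base hε x
    positivity

theorem wt_dd {N : ℕ} {ε : ℝ} (hε : 0 < ε) (k : ℕ) (i : Fin N) :
    dd i (wt N ε k) = fun x => -(2 * k * ε) * (x i * wt N ε (k + 1) x) := by
  funext x
  refine dd_unique ((wt_contDiff hε k).of_le (by norm_num)) ?_
  have hb := wt_base hε x
  have h1 := (((nsq_lineDeriv x i).const_mul ε).const_add 1).pow k
  have h2 := h1.inv (by simp only [Pi.pow_apply, zero_smul, add_zero]; positivity)
  unfold HasLineDerivAt
  refine h2.congr_deriv ?_
  unfold wt
  simp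
  rcases k with _ | k
  · simp
  · simp
    field_simp
    ring

theorem coord_contDiff {N : ℕ} (i : Fin N) {n : WithTop ℕ∞} : ContDiff ℝ n (fun x : Euc N => x i) := by fun_prop

theorem coord_dd {N : ℕ} (i : Fin N) : dd i (fun x : Euc N => x i) = fun _ => 1 := by
  funext x
  refine dd_unique (coord_contDiff i) ?_
  unfold HasLineDerivAt
  have : (fun t : ℝ => (x + t • ei i) i) = fun t => x i + t := by
    funext t; simp [ei]
  rw [this]
  exact (hasDerivAt_id 0).const_add _

theorem wt_dd2 {N : ℕ} {ε : ℝ} (hε : 0 < ε) (k : ℕ) (i : Fin N) (x : Euc N) :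
    dd i (dd i (wt N ε k)) x = -(2 * k * ε) * wt N ε (k + 1) x +
      4 * k * (k + 1) * ε ^ 2 * (x i) ^ 2 * wt N ε (k + 2) x := by
  rw [wt_dd hε k i, dd_const_mul, dd_mul, coord_dd, wt_dd hε]
  · push_cast
    ring
  · exact coord_contDiff i
  · exact (wt_contDiff hε _).of_le (by norm_num)
  · exact (coord_contDiff i).mul ((wt_contDiff hε _).of_le (by norm_num))

theorem coord_sq_le {N : ℕ} (i : Fin N) (x : Euc N) : (x i) ^ 2 ≤ ‖x‖ ^ 2 := by
  have := PiLp.norm_apply_le x i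
  rw [← sq_abs]
  exact pow_le_pow_left₀ (abs_nonneg _) this 2

theorem wt_dd_sq {N : ℕ} {ε : ℝ} (hε : 0 < ε) (k : ℕ) (i : Fin N) (x : Euc N) :
    (dd i (wt N ε k) x) ^ 2 ≤ 4 * k * (k + 1) * ε * (wt N ε k x) ^ 2 := by
  rw [wt_dd hε]
  have hb := wt_base hε x
  have h1 := wt_succ hε k x
  have h2 := wt_pos hε (k + 1) x
  set P := wt N ε (k + 1) x
  set s := 1 + ε * ‖x‖ ^ 2 with hs
  rw [← h1]
  have h3 : ε * (x i) ^ 2 ≤ s ^ 2 := by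
    have := coord_sq_le i x
    have : ε * (x i) ^ 2 ≤ ε * ‖x‖ ^ 2 := by gcongr
    nlinarith
  calc _ = 4 * k * k * ε * P ^ 2 * (ε * (x i) ^ 2) := by ring
    _ ≤ 4 * k * (k + 1) * ε * P ^ 2 * s ^ 2 := by gcongr; linarith
    _ = _ := by ring

theorem wt_dd2_le {N : ℕ} {ε : ℝ} (hε : 0 < ε) (k : ℕ) (i : Fin N) (x : Euc N) :
    dd i (dd i (wt N ε k)) x ≤ 4 * k * (k + 1) * ε * (wt N ε k x) := by
  rw [wt_dd2 hε]
  have hb := wt_base hε x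
  have h1 := wt_succ hε k x
  have h1' := wt_succ hε (k + 1) x
  have h2 := wt_pos hε (k + 2) x
  rw [show k + 1 + 1 = k + 2 from rfl] at h1'
  set P := wt N ε (k + 2) x
  set s := 1 + ε * ‖x‖ ^ 2 with hs
  rw [← h1, ← h1']
  have h3 : ε * (x i) ^ 2 ≤ s ^ 2 := by
    have := coord_sq_le i x
    have : ε * (x i) ^ 2 ≤ ε * ‖x‖ ^ 2 := by gcongr
    nlinarith
  have h4 : 0 ≤ 2 * k * ε * (s * P) := by positivity
  calc _ ≤ 4 * k * (k + 1) * ε * P * (ε * (x i) ^ 2) := by linarith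
    _ ≤ 4 * k * (k + 1) * ε * P * s ^ 2 := by gcongr
    _ = _ := by ring


theorem alg_pt {N : ℕ} {m b ε κ lam H P ht : ℝ} {a a2 g g2 : Fin N → ℝ} (hm : 1 < m) (hb : 0 ≤ b) (hε : 0 < ε)
    (hε1 : ε ≤ 1) (hH0 : 0 ≤ H) (hH1 : H ≤ 1) (hP0 : 0 < P) (hP1 : P ≤ 1) (hκ : 0 < κ) (hw : κ < H * P)
    (hg : ∀ i, g i ^ 2 ≤ b * ε * P ^ 2) (hg2 : ∀ i, g2 i ≤ b * ε * P) (hht : ht = ∑ i, a2 i)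
    (hlam : lam = N * (2 * b + 4 * (m - 1) * b) * ε) :
    (H * P - κ) * ((-ht * P - lam * (H * P)) + ∑ i, (-a2 i * P - 2 * (a i * g i) + H * g2 i)) +
      (m - 1) * ∑ i, (-a i * P + H * g i) ^ 2 ≤
      2 * |ht| + (2 * m - 1) * ∑ i, a i ^ 2 + 8 * N * (m - 1) * b * κ ^ 2 := by
  have hθ1 : H * P ≤ 1 := by nlinarith
  have hθ0 : 0 < H * P := by linarith
  obtain ⟨θ, hθ⟩ : ∃ θ, θ = H * P := ⟨_, rfl⟩
  obtain ⟨w, hwd⟩ : ∃ w, w = θ - κ := ⟨_, rfl⟩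
  rw [← hθ] at hw hθ1 hθ0 ⊢
  rw [← hwd]
  have hw0 : 0 < w := by linarith
  have hwθ : w ≤ θ := by linarith
  have hw1 : w ≤ 1 := by linarith
  have hbe : 0 ≤ b * ε := by positivity
  have hθ2 : θ ^ 2 ≤ 2 * (w * θ) + 4 * κ ^ 2 := by
    subst hwd
    nlinarith [sq_nonneg (θ - 2 * κ)]
  have key : ∀ i, w * (-2 * (a i * g i) + H * g2 i) + (m - 1) * (-a i * P + H * g i) ^ 2 ≤
      (2 * m - 1) * a i ^ 2 + (2 * b + 4 * (m - 1) * b) * ε * (w * θ) + 8 * (m - 1) * b * κ ^ 2 := by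
    intro i
    have e1 : w * (-2 * (a i * g i)) ≤ a i ^ 2 + b * ε * (w * θ) := by
      have h1 : (w * g i) ^ 2 ≤ b * ε * (w * θ) := by
        calc (w * g i) ^ 2 = w * w * (g i ^ 2) := by ring
          _ ≤ w * θ * (b * ε * P ^ 2) := by gcongr; exact hg i
          _ ≤ w * θ * (b * ε * 1) := by gcongr; exact pow_le_one₀ hP0.le hP1
          _ = _ := by ring
      nlinarith [sq_nonneg (a i + w * g i)]
    have e2 : w * (H * g2 i) ≤ b * ε * (w * θ) := by
      calc w * (H * g2 i) ≤ w * (H * (b * ε * P)) := by gcongr; exact hg2 i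
        _ = _ := by rw [hθ]; ring
    have e3 : (-a i * P + H * g i) ^ 2 ≤ 2 * a i ^ 2 + 2 * (b * ε) * θ ^ 2 := by
      have h1 : (H * g i) ^ 2 ≤ b * ε * θ ^ 2 := by
        calc (H * g i) ^ 2 = H ^ 2 * g i ^ 2 := by ring
          _ ≤ H ^ 2 * (b * ε * P ^ 2) := by gcongr; exact hg i
          _ = _ := by rw [hθ]; ring
      have h2 : (a i * P) ^ 2 ≤ a i ^ 2 := by
        rw [mul_pow]
        exact mul_le_of_le_one_right (sq_nonneg _) (pow_le_one₀ hP0.le hP1)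
      nlinarith [sq_nonneg (a i * P + H * g i)]
    have e4 : (m - 1) * (-a i * P + H * g i) ^ 2 ≤ (m - 1) * (2 * a i ^ 2 + 2 * (b * ε) * (2 * (w * θ) + 4 * κ ^ 2)) := by
      have : 2 * (b * ε) * θ ^ 2 ≤ 2 * (b * ε) * (2 * (w * θ) + 4 * κ ^ 2) := by gcongr
      refine mul_le_mul_of_nonneg_left (by linarith) (by linarith)
    have e5 : (m - 1) * b * κ ^ 2 * ε ≤ (m - 1) * b * κ ^ 2 * 1 := by
      have : 0 ≤ m - 1 := by linarith
      gcongr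
    linarith
  have hsum := Finset.sum_le_sum fun i (_ : i ∈ Finset.univ) => key i
  have e6 : ∑ i : Fin N, ((2 * m - 1) * a i ^ 2 + (2 * b + 4 * (m - 1) * b) * ε * (w * θ) + 8 * (m - 1) * b * κ ^ 2) =
      (2 * m - 1) * ∑ i, a i ^ 2 + lam * (w * θ) + 8 * N * (m - 1) * b * κ ^ 2 := by
    rw [Finset.sum_add_distrib, Finset.sum_add_distrib, ← Finset.mul_sum]
    simp [hlam]; ring
  have e7 : ∑ i, (w * (-2 * (a i * g i) + H * g2 i) + (m - 1) * (-a i * P + H * g i) ^ 2) =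
      w * (∑ i, (-a2 i * P - 2 * (a i * g i) + H * g2 i)) + w * P * ht + (m - 1) * ∑ i, (-a i * P + H * g i) ^ 2 := by
    rw [hht, Finset.mul_sum, Finset.mul_sum, Finset.mul_sum, ← Finset.sum_add_distrib, ← Finset.sum_add_distrib]
    refine Finset.sum_congr rfl fun i _ => ?_
    ring
  rw [e6, e7] at hsum
  have e8 : -(w * P * ht) ≤ |ht| := by
    have : |w * P * ht| ≤ 1 * |ht| := by
      rw [abs_mul, abs_of_pos (by positivity : 0 < w * P)]
      gcongr
      nlinarith
    linarith [neg_abs_le (w * P * ht)]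
  linarith

def psi (N : ℕ) (ε lam : ℝ) (x : Euc N) (t : ℝ) : ℝ := Real.exp (-lam * t) * wt N ε N x

def theta (N : ℕ) (η : Euc N → ℝ) (ε lam : ℝ) (x : Euc N) (t : ℝ) : ℝ :=
  (1 - heatPot N η x t) * psi N ε lam x t

def Phi (N : ℕ) (m : ℝ) (η : Euc N → ℝ) (ε lam κ : ℝ) (x : Euc N) (t : ℝ) : ℝ :=
  pp m (theta N η ε lam x t - κ)

theorem psi_C2 {N : ℕ} {ε : ℝ} (hε : 0 < ε) (lam : ℝ) : C2 N (psi N ε lam) := by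
  unfold C2 psi
  have := wt_contDiff (N := N) hε N
  fun_prop

theorem theta_C2 {N : ℕ} {η : Euc N → ℝ} (hη : ContDiff ℝ 2 η) (hc : HasCompactSupport η) {ε : ℝ} (hε : 0 < ε) (lam : ℝ) :
    C2 N (theta N η ε lam) :=
  ContDiffOn.mul (contDiffOn_const.sub (heat_C2 hη hc)) (psi_C2 hε lam)

theorem Phi_C2 {N : ℕ} {m : ℝ} (hm : 2 < m) {η : Euc N → ℝ} (hη : ContDiff ℝ 2 η) (hc : HasCompactSupport η) {ε : ℝ} (hε : 0 < ε) (lam κ : ℝ) :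
    C2 N (Phi N m η ε lam κ) :=
  (pp_C2 hm).comp_contDiffOn (ContDiffOn.sub (theta_C2 hη hc hε lam) contDiffOn_const)

theorem Phi_dt {N : ℕ} {m : ℝ} (hm : 2 < m) {η : Euc N → ℝ} (hη : ContDiff ℝ 2 η) (hc : HasCompactSupport η) {ε : ℝ}
    (lam κ : ℝ) {t : ℝ} (ht : 0 < t) (x : Euc N) :
    deriv (Phi N m η ε lam κ x) t = m * pp (m - 1) (theta N η ε lam x t - κ) *
      (-deriv (heatPot N η x) t * psi N ε lam x t - lam * theta N η ε lam x t) := by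
  have h1 := (heat_dt hη.continuous hc ht x)
  have h1' := h1.const_sub 1
  have h2 : HasDerivAt (psi N ε lam x) (-lam * psi N ε lam x t) t := by
    unfold psi
    have := (((hasDerivAt_id t).const_mul (-lam)).exp).mul_const (wt N ε N x)
    refine this.congr_deriv ?_
    simp; ring
  have h3 := (h1'.mul h2).sub_const κ
  have h4 := (pp_deriv (by linarith : 1 < m) (theta N η ε lam x t - κ)).comp t h3
  have h5 : deriv (Phi N m η ε lam κ x) t = _ := h4.deriv
  rw [h5, h1.deriv]
  simp only [theta]
  ring

theorem theta_dd {N : ℕ} {η : Euc N → ℝ} (hη : ContDiff ℝ 2 η) (hc : HasCompactSupport η) {ε : ℝ} (hε : 0 < ε) (lam : ℝ)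
    {t : ℝ} (ht : 0 < t) (i : Fin N) :
    dd i (fun y => theta N η ε lam y t) = fun x => -dd i (fun y => heatPot N η y t) x * psi N ε lam x t +
      (1 - heatPot N η x t) * dd i (fun y => psi N ε lam y t) x := by
  have h1 : ContDiff ℝ 1 (fun y => heatPot N η y t) := ((heat_C2 hη hc).slice ht).of_le (by norm_num)
  have h2 : ContDiff ℝ 1 (fun y => psi N ε lam y t) := ((psi_C2 hε lam).slice ht).of_le (by norm_num)
  unfold theta
  rw [dd_mul (contDiff_const.sub h1) h2, dd_const_sub _ h1]

theorem theta_dd2 {N : ℕ} {η : Euc N → ℝ} (hη : ContDiff ℝ 2 η) (hc : HasCompactSupport η) {ε : ℝ} (hε : 0 < ε) (lam : ℝ)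
    {t : ℝ} (ht : 0 < t) (i : Fin N) (x : Euc N) :
    dd i (dd i (fun y => theta N η ε lam y t)) x = -dd i (dd i (fun y => heatPot N η y t)) x * psi N ε lam x t -
      2 * (dd i (fun y => heatPot N η y t) x * dd i (fun y => psi N ε lam y t) x) +
      (1 - heatPot N η x t) * dd i (dd i (fun y => psi N ε lam y t)) x := by
  have h1 : ContDiff ℝ 2 (fun y => heatPot N η y t) := ((heat_C2 hη hc).slice ht)
  have h2 : ContDiff ℝ 2 (fun y => psi N ε lam y t) := ((psi_C2 hε lam).slice ht)
  have h1' : ContDiff ℝ 1 (fun y => heatPot N η y t) := h1.of_le (by norm_num)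
  have h2' : ContDiff ℝ 1 (fun y => psi N ε lam y t) := h2.of_le (by norm_num)
  have h3 : ContDiff ℝ 1 (fun y => -dd i (fun y => heatPot N η y t) y) := (dd_C1 h1).neg
  have h4 : dd i (fun y => -dd i (fun y => heatPot N η y t) y) = fun y => - dd i (dd i (fun y => heatPot N η y t)) y := by
    have := dd_const_sub (i := i) 0 (dd_C1 (i := i) h1)
    simpa using this
  rw [theta_dd hη hc hε lam ht, dd_add (h3.mul h2') ((contDiff_const.sub h1').mul (dd_C1 h2)), dd_mul h3 h2',
    dd_mul (contDiff_const.sub h1') (dd_C1 h2), dd_const_sub _ h1', h4]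
  ring

theorem Phi_dd2 {N : ℕ} {m : ℝ} (hm : 2 < m) {η : Euc N → ℝ} (hη : ContDiff ℝ 2 η) (hc : HasCompactSupport η) {ε : ℝ} (hε : 0 < ε) (lam κ : ℝ)
    {t : ℝ} (ht : 0 < t) (i : Fin N) (x : Euc N) :
    dd i (dd i (fun y => Phi N m η ε lam κ y t)) x =
      m * pp (m - 1) (theta N η ε lam x t - κ) * dd i (dd i (fun y => theta N η ε lam y t)) x +
      m * (m - 1) * pp (m - 2) (theta N η ε lam x t - κ) * (dd i (fun y => theta N η ε lam y t) x) ^ 2 := by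
  have h1 : ContDiff ℝ 2 (fun y => theta N η ε lam y t) := (theta_C2 hη hc hε lam).slice ht
  have h1' : ContDiff ℝ 1 (fun y => theta N η ε lam y t) := h1.of_le (by norm_num)
  have h2 : ContDiff ℝ 1 (fun y => theta N η ε lam y t - κ) := h1'.sub contDiff_const
  have h3 : ∀ s, HasDerivAt (pp (m - 1)) ((m - 1) * pp (m - 2) s) s := fun s => by
    have := pp_deriv (by linarith : 1 < m - 1) s
    rwa [show m - 1 - 1 = m - 2 by ring] at this
  have h4 : ∀ s, HasDerivAt (fun s => m * pp (m - 1) s) (m * ((m - 1) * pp (m - 2) s)) s := fun s => (h3 s).const_mul m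
  have h5 : ContDiff ℝ 1 (fun y => m * pp (m - 1) (theta N η ε lam y t - κ)) :=
    contDiff_const.mul ((pp_C1 (by linarith : 1 < m - 1)).comp h2)
  unfold Phi
  rw [dd_comp h2 (pp_deriv (by linarith : 1 < m)), dd_sub_const _ h1', dd_mul h5 (dd_C1 h1), dd_comp h2 h4, dd_sub_const _ h1']
  ring


def bN (N : ℕ) : ℝ := 4 * N * (N + 1)
def lamc (N : ℕ) (m ε : ℝ) : ℝ := N * (2 * bN N + 4 * (m - 1) * bN N) * ε
def C0c (N : ℕ) (m : ℝ) : ℝ := 2 + (2 * m - 1) * N + 8 * N * (m - 1) * bN N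

theorem bN_nonneg (N : ℕ) : 0 ≤ bN N := by unfold bN; positivity

theorem lamc_nonneg (N : ℕ) {m ε : ℝ} (hm : 1 < m) (hε : 0 < ε) : 0 ≤ lamc N m ε := by
  have := bN_nonneg N
  have : 0 ≤ m - 1 := by linarith
  unfold lamc; positivity

theorem C0c_pos (N : ℕ) {m : ℝ} (hm : 1 < m) : 0 < C0c N m := by
  have := bN_nonneg N
  have : 0 ≤ m - 1 := by linarith
  have : 0 ≤ 2 * m - 1 := by linarith
  unfold C0c; positivity

theorem psi_pos {N : ℕ} {ε : ℝ} (hε : 0 < ε) (lam : ℝ) (x : Euc N) (t : ℝ) : 0 < psi N ε lam x t :=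
  mul_pos (Real.exp_pos _) (wt_pos hε _ _)

theorem psi_le {N : ℕ} {ε : ℝ} (hε : 0 < ε) {lam : ℝ} (hl : 0 ≤ lam) (x : Euc N) {t : ℝ} (ht : 0 < t) : psi N ε lam x t ≤ wt N ε N x := by
  unfold psi
  refine mul_le_of_le_one_left (wt_pos hε _ _).le ?_
  rw [Real.exp_le_one_iff]
  nlinarith

theorem psi_dd {N : ℕ} {ε : ℝ} (hε : 0 < ε) (lam : ℝ) (t : ℝ) (i : Fin N) :
    dd i (fun y => psi N ε lam y t) = fun x => Real.exp (-lam * t) * dd i (wt N ε N) x :=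
  dd_const_mul _ ((wt_contDiff hε _).of_le (by norm_num))

theorem psi_dd2 {N : ℕ} {ε : ℝ} (hε : 0 < ε) (lam : ℝ) (t : ℝ) (i : Fin N) :
    dd i (dd i (fun y => psi N ε lam y t)) = fun x => Real.exp (-lam * t) * dd i (dd i (wt N ε N)) x := by
  rw [psi_dd hε, dd_const_mul _ (dd_C1 (wt_contDiff hε _))]

theorem pp_step {m w : ℝ} (hw : 0 < w) : pp (m - 1) w = pp (m - 2) w * w := by
  unfold pp
  rw [max_eq_left hw.le, ← Real.rpow_add_one hw.ne']
  congr 1; ring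

/-- the differential inequality -/
theorem Phi_ineq {N : ℕ} {m : ℝ} (hm : 2 < m) {η : Euc N → ℝ} (hη : ContDiff ℝ 2 η) (hc : HasCompactSupport η)
    (h01 : ∀ x, 0 ≤ η x ∧ η x ≤ 1) {ε κ : ℝ} (hε : 0 < ε) (hε1 : ε ≤ 1) (hκ : 0 < κ)
    {t : ℝ} (ht : 0 < t) (x : Euc N) :
    deriv (Phi N m η ε (lamc N m ε) κ x) t + lapl (fun y => Phi N m η ε (lamc N m ε) κ y t) x ≤
      m * C0c N m * pp (m - 2) (theta N η ε (lamc N m ε) x t - κ) * (RR N η x t + κ ^ 2) := by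
  have hl := lamc_nonneg N (by linarith : 1 < m) hε
  have hlam : lamc N m ε = N * (2 * bN N + 4 * (m - 1) * bN N) * ε := rfl
  set lam := lamc N m ε
  rw [lapl_eq, Phi_dt hm hη hc _ _ ht]
  simp_rw [Phi_dd2 hm hη hc hε lam κ ht]
  rw [Finset.sum_add_distrib, ← Finset.mul_sum, ← Finset.mul_sum]
  rcases le_or_gt (theta N η ε lam x t - κ) 0 with hw | hw
  · rw [pp_of_nonpos (by linarith) hw, pp_of_nonpos (by linarith) hw]
    simp
  rw [pp_step hw]
  have hpp := pp_nonneg (m - 2) (theta N η ε lam x t - κ)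
  have hP0 := psi_pos hε lam x t
  have hP1 := (psi_le hε hl x ht).trans (wt_le_one hε N x)
  have hH1 := heat_nonneg (fun x => (h01 x).1) ht x
  have hH0 := heat_le hη.continuous hc (fun x => (h01 x).2) ht x
  have he := Real.exp_pos (-lam * t)
  have key := alg_pt (m := m) (b := bN N) (ε := ε) (κ := κ) (lam := lam) (H := 1 - heatPot N η x t) (P := psi N ε lam x t)
    (ht := deriv (heatPot N η x) t) (a := fun i => dd i (fun y => heatPot N η y t) x) (a2 := fun i => dd i (dd i (fun y => heatPot N η y t)) x)
    (g := fun i => dd i (fun y => psi N ε lam y t) x) (g2 := fun i => dd i (dd i (fun y => psi N ε lam y t)) x)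
    (by linarith) (bN_nonneg N) hε hε1 (by linarith) (by linarith) hP0 hP1 hκ (by unfold theta at hw; linarith)
    (fun i => by
      simp only [psi_dd hε]
      have := wt_dd_sq hε N i x
      unfold psi
      rw [mul_pow, mul_pow]
      calc _ ≤ Real.exp (-lam * t) ^ 2 * (4 * N * (N + 1) * ε * (wt N ε N x) ^ 2) := by gcongr
        _ = _ := by unfold bN; ring)
    (fun i => by
      simp only [psi_dd2 hε]
      have := wt_dd2_le hε N i x
      unfold psi
      calc _ ≤ Real.exp (-lam * t) * (4 * N * (N + 1) * ε * (wt N ε N x)) := by gcongr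
        _ = _ := by unfold bN; ring)
    (heat_eqn hη hc ht x) hlam
  have hsq : ∑ i, (dd i (fun y => heatPot N η y t) x) ^ 2 ≤ N * ‖fderiv ℝ (fun y => heatPot N η y t) x‖ ^ 2 := by
    calc _ ≤ ∑ i : Fin N, ‖fderiv ℝ (fun y => heatPot N η y t) x‖ ^ 2 := by
          refine Finset.sum_le_sum fun i _ => ?_
          rw [← sq_abs]
          exact pow_le_pow_left₀ (abs_nonneg _) (abs_dd_le _ _ _) 2
      _ = _ := by simp
  have hbN := bN_nonneg N
  have h1 : 2 * |deriv (heatPot N η x) t| + (2 * m - 1) * ∑ i, (dd i (fun y => heatPot N η y t) x) ^ 2 + 8 * N * (m - 1) * bN N * κ ^ 2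
      ≤ C0c N m * (RR N η x t + κ ^ 2) := by
    have hd : 0 ≤ |deriv (heatPot N η x) t| := abs_nonneg _
    have hm1 : 0 ≤ m - 1 := by linarith
    have hm2 : 0 ≤ 2 * m - 1 := by linarith
    have e1 := mul_le_mul_of_nonneg_left hsq hm2
    have e2 : RR N η x t = ‖fderiv ℝ (fun y => heatPot N η y t) x‖ ^ 2 + |deriv (heatPot N η x) t| := rfl
    rw [e2]
    unfold C0c
    set X := ‖fderiv ℝ (fun y => heatPot N η y t) x‖ ^ 2
    set Y := |deriv (heatPot N η x) t|
    have hX : 0 ≤ X := by positivity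
    have f1 : 0 ≤ 2 * (X + κ ^ 2) := by positivity
    have f2 : 0 ≤ (2 * m - 1) * N * (Y + κ ^ 2) := by positivity
    have f3 : 0 ≤ 8 * N * (m - 1) * bN N * (X + Y) := by positivity
    linarith
  have h2 := mul_le_mul_of_nonneg_left (key.trans h1) (mul_nonneg (by linarith : (0:ℝ) ≤ m) hpp)
  simp_rw [theta_dd2 hη hc hε lam ht, theta_dd hη hc hε lam ht]
  simp only [theta] at h2 ⊢
  refine le_trans (le_of_eq ?_) (h2.trans (le_of_eq ?_))
  · ring
  · ring

theorem radd_aux {a b p : ℝ} (ha : 0 ≤ a) (hb : 0 ≤ b) (hp : 1 ≤ p) :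
    (a + b) ^ p ≤ 2 ^ (p - 1) * (a ^ p + b ^ p) := by
  have := NNReal.rpow_add_le_mul_rpow_add_rpow ⟨a, ha⟩ ⟨b, hb⟩ hp
  exact_mod_cast this

theorem pt_main {N : ℕ} {q : ℝ} (hq : 1 < q) : ∃ C1 : ℝ, 0 < C1 ∧ ∀ {η : Euc N → ℝ}, ContDiff ℝ 2 η → HasCompactSupport η →
    (∀ x, 0 ≤ η x ∧ η x ≤ 1) → ∀ {ε κ : ℝ}, 0 < ε → ε ≤ 1 → 0 < κ → ∀ {t : ℝ}, 0 < t → ∀ (x : Euc N) (u : ℝ), 0 ≤ u →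
    u * (deriv (Phi N (2 * (q / (q - 1))) η ε (lamc N (2 * (q / (q - 1))) ε) κ x) t +
      lapl (fun y => Phi N (2 * (q / (q - 1))) η ε (lamc N (2 * (q / (q - 1))) ε) κ y t) x) ≤
      1 / 2 * (u ^ q * Phi N (2 * (q / (q - 1))) η ε (lamc N (2 * (q / (q - 1))) ε) κ x t) +
      C1 * (RR N η x t ^ (q / (q - 1)) + κ ^ (2 * (q / (q - 1)))) := by
  have hq1 : 0 < q - 1 := by linarith
  have hp1 : 1 < q / (q - 1) := by rw [lt_div_iff₀ hq1]; linarith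
  have hmq : (2 * (q / (q - 1)) - 2) * q = 2 * (q / (q - 1)) := by field_simp; ring
  have hconj : q.HolderConjugate (q / (q - 1)) := Real.HolderConjugate.conjExponent hq
  set p := q / (q - 1)
  set m := 2 * p
  have hm : 2 < m := by simp only [m]; linarith
  have hC0 := C0c_pos N (by linarith : 1 < m)
  let δ : ℝ := (1 / 2) ^ (1 / q)
  have hδ : 0 < δ := by positivity
  have hδq : δ ^ q = 1 / 2 := by
    simp only [δ]
    rw [← Real.rpow_mul (by norm_num), one_div_mul_cancel (by linarith), Real.rpow_one]
  let A : ℝ := m * C0c N m / δ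
  have hA : 0 < A := by positivity
  refine ⟨A ^ p * 2 ^ (p - 1), by positivity, fun {η} hη hc h01 {ε κ} hε hε1 hκ {t} ht x u hu => ?_⟩
  have h1 := mul_le_mul_of_nonneg_left (Phi_ineq hm hη hc h01 hε hε1 hκ ht x) hu
  refine h1.trans ?_
  unfold Phi
  set s := theta N η ε (lamc N m ε) x t - κ
  have hs : 0 ≤ max s 0 := le_max_right _ _
  have hR := RR_nonneg η x t
  set R := RR N η x t
  have hpp := pp_nonneg (m - 2) s
  have h2 := Real.young_inequality_of_nonneg (a := δ * (u * pp (m - 2) s)) (b := A * (R + κ ^ 2)) (by positivity) (by positivity) hconj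
  have h3 : (δ * (u * pp (m - 2) s)) ^ q / q ≤ 1 / 2 * (u ^ q * pp m s) := by
    rw [Real.mul_rpow hδ.le (by positivity), hδq, Real.mul_rpow hu hpp]
    have : pp (m - 2) s ^ q = pp m s := by
      unfold pp
      rw [← Real.rpow_mul hs, hmq]
    rw [this]
    exact div_le_self (mul_nonneg (by norm_num) (mul_nonneg (by positivity) (pp_nonneg _ _))) hq.le
  have h4 : (A * (R + κ ^ 2)) ^ p / p ≤ A ^ p * 2 ^ (p - 1) * (R ^ p + κ ^ m) := by
    refine (div_le_self (by positivity) hp1.le).trans ?_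
    rw [Real.mul_rpow hA.le (by positivity), mul_assoc]
    gcongr
    have := radd_aux hR (sq_nonneg κ) hp1.le
    refine this.trans (le_of_eq ?_)
    rw [← Real.rpow_natCast κ 2, ← Real.rpow_mul hκ.le]
    simp [m]
  have h5 : u * (m * C0c N m * pp (m - 2) s * (R + κ ^ 2)) = δ * (u * pp (m - 2) s) * (A * (R + κ ^ 2)) := by
    simp only [A]; field_simp
  rw [h5]
  linarith


theorem dd_ibp {N : ℕ} (i : Fin N) {v f : Euc N → ℝ} (hv : ContDiff ℝ 1 v) (hf : ContDiff ℝ 1 f) (hc : HasCompactSupport f) :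
    ∫ x, v x * dd i f x = -∫ x, dd i v x * f x := by
  refine integral_mul_fderiv_eq_neg_fderiv_mul_of_integrable ?_ ?_ ?_ (fun x _ => hv.differentiable (by norm_num) x) (fun x _ => hf.differentiable (by norm_num) x)
  · exact ((dd_cont hv).mul hf.continuous).integrable_of_hasCompactSupport hc.mul_left
  · exact (hv.continuous.mul (dd_cont hf)).integrable_of_hasCompactSupport (dd_supp hc).mul_left
  · exact (hv.continuous.mul hf.continuous).integrable_of_hasCompactSupport hc.mul_left

theorem lapl_ibp {N : ℕ} {v f : Euc N → ℝ} (hv : ContDiff ℝ 2 v) (hf : ContDiff ℝ 2 f) (hc : HasCompactSupport f) :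
    ∫ x, lapl v x * f x = ∫ x, v x * lapl f x := by
  simp_rw [lapl_eq, Finset.sum_mul, Finset.mul_sum]
  rw [integral_finsetSum, integral_finsetSum]
  · refine Finset.sum_congr rfl fun i _ => ?_
    have h1 := dd_ibp i (dd_C1 (i := i) hv) (hf.of_le (by norm_num)) hc
    have h2 := dd_ibp i (hv.of_le (by norm_num)) (dd_C1 (i := i) hf) (dd_supp hc)
    linarith
  · intro i _
    exact (hv.continuous.mul (dd_cont (dd_C1 hf))).integrable_of_hasCompactSupport (dd_supp (dd_supp hc)).mul_left
  · intro i _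
    exact ((dd_cont (dd_C1 hv)).mul hf.continuous).integrable_of_hasCompactSupport hc.mul_left

theorem prod_int {N : ℕ} {f : Euc N → ℝ → ℝ} (hf : ContinuousOn (fun p : Euc N × ℝ => f p.1 p.2) (QQ N)) (A : ℝ) {s T : ℝ}
    (hs : 0 < s) : Integrable (Function.uncurry f)
      ((volume.restrict (closedBall (0 : Euc N) A)).prod (volume.restrict (Ioc s T))) := by
  rw [Measure.prod_restrict]
  have h1 : IntegrableOn (fun p : Euc N × ℝ => f p.1 p.2) (closedBall (0 : Euc N) A ×ˢ Icc s T) :=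
    ContinuousOn.integrableOn_compact ((isCompact_closedBall _ _).prod isCompact_Icc)
      (hf.mono fun z hz => ⟨mem_univ _, lt_of_lt_of_le hs hz.2.1⟩)
  exact h1.mono_set (prod_mono le_rfl Ioc_subset_Icc_self)

theorem slice_int {N : ℕ} {f : Euc N → ℝ → ℝ} (hf : ContinuousOn (fun p : Euc N × ℝ => f p.1 p.2) (QQ N)) (A : ℝ) {t : ℝ}
    (ht : 0 < t) : IntegrableOn (fun x => f x t) (closedBall (0 : Euc N) A) := by
  refine ContinuousOn.integrableOn_compact (isCompact_closedBall _ _) ?_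
  exact hf.comp (f := fun x => (x, t)) (by fun_prop) fun x _ => ⟨mem_univ _, ht⟩

theorem time_int {N : ℕ} {f : Euc N → ℝ → ℝ} (hf : ContinuousOn (fun p : Euc N × ℝ => f p.1 p.2) (QQ N)) (A : ℝ) {s T : ℝ}
    (hs : 0 < s) : IntegrableOn (fun t => ∫ x in closedBall (0 : Euc N) A, f x t) (Ioc s T) :=
  (prod_int hf A hs).integral_prod_right

theorem energy {N : ℕ} {u F g : Euc N → ℝ → ℝ} (hu : C2 N u) (hF : C2 N F) {A : ℝ}
    (hA : ∀ t, 0 < t → ∀ x, x ∉ closedBall (0 : Euc N) A → F x t = 0) {q : ℝ} (hq : 1 < q) (hpos : ∀ x t, 0 < t → 0 < u x t)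
    (heq : ∀ x t, 0 < t → deriv (u x) t - lapl (fun y => u y t) x + u x t ^ q = 0)
    (hg : ContinuousOn (fun p : Euc N × ℝ => g p.1 p.2) (QQ N))
    (hpt : ∀ x t, 0 < t → u x t * (deriv (F x) t + lapl (fun y => F y t) x) ≤ 1 / 2 * (u x t ^ q * F x t) + g x t)
    {s T : ℝ} (hs : 0 < s) (hsT : s ≤ T) :
    1 / 2 * (∫ t in Ioc s T, ∫ x in closedBall (0 : Euc N) A, u x t ^ q * F x t) + ∫ x in closedBall (0 : Euc N) A, u x T * F x T
      ≤ (∫ x in closedBall (0 : Euc N) A, u x s * F x s) + ∫ t in Ioc s T, ∫ x in closedBall (0 : Euc N) A, g x t := by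
  let G : Euc N → ℝ → ℝ := fun x t => deriv (u x) t * F x t + u x t * deriv (F x) t
  have hGc : ContinuousOn (fun p : Euc N × ℝ => G p.1 p.2) (QQ N) :=
    (hu.cont_dt.mul hF.cont).add (hu.cont.mul hF.cont_dt)
  have huq : ContinuousOn (fun p : Euc N × ℝ => u p.1 p.2 ^ q * F p.1 p.2) (QQ N) :=
    (hu.cont.rpow_const fun _ _ => Or.inr (by linarith)).mul hF.cont
  have huF : ContinuousOn (fun p : Euc N × ℝ => u p.1 p.2 * F p.1 p.2) (QQ N) := hu.cont.mul hF.cont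
  have hT : 0 < T := lt_of_lt_of_le hs hsT
  have hG : ∀ x t, 0 < t → HasDerivAt (fun t => u x t * F x t) (G x t) t := fun x t ht => by
    have h1 := (hu.td ht x).differentiableAt.hasDerivAt
    have h2 := (hF.td ht x).differentiableAt.hasDerivAt
    exact h1.mul h2
  have hftc : ∀ x, ∫ t in Ioc s T, G x t = u x T * F x T - u x s * F x s := fun x => by
    rw [← intervalIntegral.integral_of_le hsT]
    refine intervalIntegral.integral_eq_sub_of_hasDerivAt (f := fun t => u x t * F x t) (fun t ht => ?_) ?_
    · rw [uIcc_of_le hsT] at ht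
      exact hG x t (lt_of_lt_of_le hs ht.1)
    · refine ContinuousOn.intervalIntegrable ?_
      rw [uIcc_of_le hsT]
      exact hGc.comp (f := fun t => (x, t)) (by fun_prop) fun t ht => ⟨mem_univ _, lt_of_lt_of_le hs ht.1⟩
  have hswap := integral_integral_swap (prod_int hGc A (T := T) hs)
  simp_rw [hftc] at hswap
  rw [integral_sub (slice_int (f := fun x t => u x t * F x t) huF A hT) (slice_int (f := fun x t => u x t * F x t) huF A hs)] at hswap
  have hper : ∀ t, 0 < t → ∫ x in closedBall (0 : Euc N) A, G x t ≤
      (∫ x in closedBall (0 : Euc N) A, g x t) - 1 / 2 * ∫ x in closedBall (0 : Euc N) A, u x t ^ q * F x t := by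
    intro t ht
    have hFt : HasCompactSupport (fun x => F x t) :=
      HasCompactSupport.intro (isCompact_closedBall (0 : Euc N) A) (hA t ht)
    have h1 := lapl_ibp (hu.slice ht) (hF.slice ht) hFt
    have hl0 : ∀ x, x ∉ closedBall (0 : Euc N) A → lapl (fun y => F y t) x = 0 := by
      intro x hx
      have hss : Function.support (fun x => F x t) ⊆ closedBall (0 : Euc N) A := fun y hy =>
        by_contra fun h' => hy (hA t ht y h')
      have hx0 : x ∉ tsupport (fun x => F x t) := fun h => hx (closure_minimal hss isClosed_closedBall h)
      rw [lapl_eq]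
      refine Finset.sum_eq_zero fun i _ => ?_
      by_contra h
      exact hx0 (tsupport_fderiv_apply_subset ℝ _ (tsupport_fderiv_apply_subset ℝ _ (subset_tsupport _ h)))
    have e1 : ∫ x in closedBall (0 : Euc N) A, lapl (fun y => u y t) x * F x t = ∫ x, lapl (fun y => u y t) x * F x t :=
      setIntegral_eq_integral_of_forall_compl_eq_zero (fun x hx => by rw [hA t ht x hx, mul_zero])
    have e2 : ∫ x in closedBall (0 : Euc N) A, u x t * lapl (fun y => F y t) x = ∫ x, u x t * lapl (fun y => F y t) x :=
      setIntegral_eq_integral_of_forall_compl_eq_zero (fun x hx => by rw [hl0 x hx, mul_zero])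
    rw [← e1, ← e2] at h1
    have c1 : ContinuousOn (fun p : Euc N × ℝ => lapl (fun y => u y p.2) p.1 * F p.1 p.2) (QQ N) := hu.cont_lapl.mul hF.cont
    have c2 : ContinuousOn (fun p : Euc N × ℝ => u p.1 p.2 * lapl (fun y => F y p.2) p.1) (QQ N) := hu.cont.mul hF.cont_lapl
    have i1 := slice_int (f := fun x t => lapl (fun y => u y t) x * F x t) c1 A ht
    have i2 := slice_int (f := fun x t => u x t * lapl (fun y => F y t) x) c2 A ht
    have i3 := slice_int (f := fun x t => u x t ^ q * F x t) huq A ht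
    have i4 := slice_int hg A ht
    have i5 := slice_int hGc A ht
    calc _ ≤ ∫ x in closedBall (0 : Euc N) A, ((lapl (fun y => u y t) x * F x t - u x t * lapl (fun y => F y t) x) +
          (g x t - 1 / 2 * (u x t ^ q * F x t))) := by
          refine setIntegral_mono i5 ((i1.sub i2).add (i4.sub (i3.const_mul _))) fun x => ?_
          have e1 := hpt x t ht
          have e2 : deriv (u x) t = lapl (fun y => u y t) x - u x t ^ q := by linarith [heq x t ht]
          simp only [G]
          rw [e2]
          linarith
      _ = _ := by
          refine (integral_add (i1.sub i2) (i4.sub (i3.const_mul _))).trans ?_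
          have f1 := integral_sub i1 i2
          have f2 := integral_sub i4 (i3.const_mul (1 / 2))
          rw [integral_const_mul] at f2
          rw [h1, sub_self] at f1
          exact (congrArg₂ (· + ·) f1 f2).trans (zero_add _)
  have hfin : ∫ t in Ioc s T, ∫ x in closedBall (0 : Euc N) A, G x t ≤ ∫ t in Ioc s T, ((∫ x in closedBall (0 : Euc N) A, g x t) - 1 / 2 * ∫ x in closedBall (0 : Euc N) A, u x t ^ q * F x t) := by
    refine setIntegral_mono_on (time_int hGc A hs)
      ((time_int hg A hs).sub ((time_int (f := fun x t => u x t ^ q * F x t) huq A hs).const_mul _)) measurableSet_Ioc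
      fun t ht => hper t (hs.trans ht.1)
  rw [integral_sub (time_int hg A hs) ((time_int (f := fun x t => u x t ^ q * F x t) huq A hs).const_mul _), integral_const_mul] at hfin
  linarith


theorem theta_le_wt {N : ℕ} {η : Euc N → ℝ} (hη : ContDiff ℝ 2 η) (hc : HasCompactSupport η)
    (h01 : ∀ x, 0 ≤ η x ∧ η x ≤ 1) {ε lam : ℝ} (hε : 0 < ε) (hl : 0 ≤ lam) {t : ℝ} (ht : 0 < t) (x : Euc N) :
    theta N η ε lam x t ≤ wt N ε N x ∧ theta N η ε lam x t ≤ 1 - heatPot N η x t := by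
  have h1 := heat_nonneg (fun x => (h01 x).1) ht x
  have h2 := heat_le hη.continuous hc (fun x => (h01 x).2) ht x
  have h3 := psi_le hε hl x ht
  have h4 := psi_pos hε lam x t
  have h5 := wt_le_one hε N x
  unfold theta
  constructor <;> nlinarith

theorem Phi_le_one {N : ℕ} {m : ℝ} (hm : 2 < m) {η : Euc N → ℝ} (hη : ContDiff ℝ 2 η) (hc : HasCompactSupport η)
    (h01 : ∀ x, 0 ≤ η x ∧ η x ≤ 1) {ε lam κ : ℝ} (hε : 0 < ε) (hl : 0 ≤ lam) (hκ : 0 < κ) {t : ℝ} (ht : 0 < t) (x : Euc N) :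
    Phi N m η ε lam κ x t ≤ 1 := by
  have h1 := (theta_le_wt hη hc h01 hε hl ht x).1.trans (wt_le_one hε N x)
  unfold Phi pp
  exact Real.rpow_le_one (le_max_right _ _) (max_le (by linarith) zero_le_one) (by linarith)

theorem Phi_nonneg {N : ℕ} {m : ℝ} {η : Euc N → ℝ} {ε lam κ : ℝ} (x : Euc N) (t : ℝ) : 0 ≤ Phi N m η ε lam κ x t :=
  pp_nonneg _ _

/-- radius of the support -/
def Ar (N : ℕ) (ε κ : ℝ) : ℝ := (√(1 / (κ * ε ^ N))) ^ ((N : ℝ)⁻¹)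

theorem Ar_pow {N : ℕ} (hN : 1 ≤ N) (ε κ : ℝ) : Ar N ε κ ^ N = √(1 / (κ * ε ^ N)) :=
  Real.rpow_inv_natCast_pow (Real.sqrt_nonneg _) (by omega)

theorem Ar_nonneg (N : ℕ) (ε κ : ℝ) : 0 ≤ Ar N ε κ := Real.rpow_nonneg (Real.sqrt_nonneg _) _

theorem Phi_supp {N : ℕ} (hN : 1 ≤ N) {m : ℝ} (hm : 2 < m) {η : Euc N → ℝ} (hη : ContDiff ℝ 2 η) (hc : HasCompactSupport η)
    (h01 : ∀ x, 0 ≤ η x ∧ η x ≤ 1) {ε lam κ : ℝ} (hε : 0 < ε) (hl : 0 ≤ lam) (hκ : 0 < κ) :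
    ∀ t, 0 < t → ∀ x, x ∉ closedBall (0 : Euc N) (Ar N ε κ) → Phi N m η ε lam κ x t = 0 := by
  intro t ht x hx
  rw [mem_closedBall_zero_iff, not_le] at hx
  refine pp_of_nonpos (by linarith) ?_
  have h1 := (theta_le_wt hη hc h01 hε hl ht x).1
  have h2 : Ar N ε κ ^ N < ‖x‖ ^ N := pow_lt_pow_left₀ hx (Ar_nonneg _ _ _) (by omega)
  rw [Ar_pow hN] at h2
  have h3 : 1 / (κ * ε ^ N) < (‖x‖ ^ N) ^ 2 := (Real.sqrt_lt' (lt_of_le_of_lt (Real.sqrt_nonneg _) h2)).1 h2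
  rw [div_lt_iff₀ (by positivity)] at h3
  have h4 : (‖x‖ ^ N) ^ 2 * ε ^ N ≤ (1 + ε * ‖x‖ ^ 2) ^ N := by
    rw [← pow_mul, mul_comm N 2, pow_mul, ← mul_pow]
    gcongr
    linarith
  have h5 : wt N ε N x ≤ κ := by
    unfold wt
    have hb := wt_base hε x
    rw [inv_le_comm₀ (by positivity) hκ, inv_le_iff_one_le_mul₀ hκ]
    nlinarith
  linarith

theorem init_zero {N : ℕ} {m : ℝ} (hm : 2 < m) {η : Euc N → ℝ} (hη : ContDiff ℝ 2 η) (hc : HasCompactSupport η)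
    (h01 : ∀ x, 0 ≤ η x ∧ η x ≤ 1) {K : Set (Euc N)} (hK : ∀ x ∈ K, η x = 1) {ε lam κ : ℝ} (hε : 0 < ε) (hl : 0 ≤ lam) (hκ : 0 < κ)
    {u : Euc N → ℝ → ℝ} (hu : C2 N u) (hpos : ∀ x t, 0 < t → 0 < u x t)
    (htr : ∀ E : Set (Euc N), IsCompact E → E ⊆ Kᶜ →
      Tendsto (fun t => sSup ((fun x => u x t) '' E)) (nhdsWithin 0 (Set.Ioi 0)) (nhds 0)) (A : ℝ) :
    Tendsto (fun s => ∫ x in closedBall (0 : Euc N) A, u x s * Phi N m η ε lam κ x s) (nhdsWithin 0 (Ioi 0)) (nhds 0) := by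
  obtain ⟨C, hC0, hC⟩ := heat_unif hη hc
  let E : Set (Euc N) := closedBall 0 A ∩ {x | η x ≤ 1 - κ / 2}
  have hE : IsCompact E := (isCompact_closedBall _ _).inter_right (isClosed_le hη.continuous continuous_const)
  have hEK : E ⊆ Kᶜ := fun x hx hxK => by
    have := hx.2
    rw [mem_setOf_eq, hK x hxK] at this
    linarith
  have h1 := (htr E hE hEK).const_mul ((volume : Measure (Euc N)).real (closedBall 0 A))
  rw [mul_zero] at h1
  have h2 : Tendsto (fun s : ℝ => C * √s) (nhdsWithin 0 (Ioi 0)) (nhds 0) := by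
    have : Tendsto (fun s : ℝ => C * √s) (nhds 0) (nhds (C * √0)) := (continuous_const.mul Real.continuous_sqrt).tendsto 0
    rw [Real.sqrt_zero, mul_zero] at this
    exact this.mono_left nhdsWithin_le_nhds
  refine squeeze_zero' ?_ ?_ h1
  · filter_upwards [self_mem_nhdsWithin] with s hs
    exact integral_nonneg fun x => mul_nonneg (hpos x s hs).le (Phi_nonneg x s)
  · filter_upwards [self_mem_nhdsWithin, h2.eventually_lt_const (half_pos hκ)] with s hs hs2
    have hs : 0 < s := hs
    have hM0 : 0 ≤ sSup ((fun x => u x s) '' E) := Real.sSup_nonneg (by rintro _ ⟨x, -, rfl⟩; exact (hpos x s hs).le)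
    have hbd : BddAbove ((fun x => u x s) '' E) := hE.bddAbove_image (hu.slice hs).continuous.continuousOn
    have huF : ContinuousOn (fun p : Euc N × ℝ => u p.1 p.2 * Phi N m η ε lam κ p.1 p.2) (QQ N) := hu.cont.mul (Phi_C2 hm hη hc hε lam κ).cont
    calc _ ≤ ∫ x in closedBall (0 : Euc N) A, sSup ((fun x => u x s) '' E) := by
          refine setIntegral_mono_on (slice_int (f := fun x t => u x t * Phi N m η ε lam κ x t) huF A hs)
            (integrableOn_const measure_closedBall_lt_top.ne) measurableSet_closedBall fun x hx => ?_
          by_cases hxE : x ∈ E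
          · calc _ ≤ u x s * 1 := by
                  gcongr
                  · exact (hpos x s hs).le
                  · exact Phi_le_one hm hη hc h01 hε hl hκ hs x
              _ ≤ _ := by rw [mul_one]; exact le_csSup hbd ⟨x, hxE, rfl⟩
          · have h3 : 1 - κ / 2 < η x := by
              by_contra h
              exact hxE ⟨hx, not_lt.1 h⟩
            have h4 := (abs_le.1 (hC x s hs)).1
            have h5 := (theta_le_wt hη hc h01 hε hl hs x).2
            have h6 : Phi N m η ε lam κ x s = 0 := pp_of_nonpos (by linarith) (by linarith)
            rw [h6, mul_zero]
            exact hM0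
      _ = _ := by rw [setIntegral_const, smul_eq_mul]

theorem stepB {N : ℕ} (hN : 1 ≤ N) {q : ℝ} (hq : 1 < q) : ∃ C1 : ℝ, 0 < C1 ∧ ∀ {η : Euc N → ℝ}, ContDiff ℝ 2 η → HasCompactSupport η →
    (∀ x, 0 ≤ η x ∧ η x ≤ 1) → ∀ {K : Set (Euc N)}, (∀ x ∈ K, η x = 1) → ∀ {u : Euc N → ℝ → ℝ}, IsSol N q u K →
    ∀ {ε κ : ℝ}, 0 < ε → ε ≤ 1 → 0 < κ → κ ≤ 1 → ∀ {s T : ℝ}, 0 < s → s ≤ T →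
    1 / 2 * (∫ t in Ioc s T, ∫ x in closedBall (0 : Euc N) (Ar N ε κ), u x t ^ q * Phi N (2 * (q / (q - 1))) η ε (lamc N (2 * (q / (q - 1))) ε) κ x t) +
      ∫ x in closedBall (0 : Euc N) (Ar N ε κ), u x T * Phi N (2 * (q / (q - 1))) η ε (lamc N (2 * (q / (q - 1))) ε) κ x T ≤
      C1 * Rnorm N q η + C1 * (T * ((volume : Measure (Euc N)).real (ball 0 1) * √(1 / ε ^ N))) * κ := by
  obtain ⟨C1, hC1, hpt⟩ := pt_main (N := N) hq
  refine ⟨C1, hC1, fun {η} hη hc h01 {K} hK {u} hu {ε κ} hε hε1 hκ hκ1 {s0 T} hs0 hsT => ?_⟩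
  obtain ⟨huC, hpos, heq, htr⟩ := hu
  have hq1 : 0 < q - 1 := by linarith
  have hp1 : 1 < q / (q - 1) := by rw [lt_div_iff₀ hq1]; linarith
  have hRn := Rnorm_eq q η
  have hpt' := fun x t (ht : 0 < t) => hpt hη hc h01 hε hε1 hκ ht x (u x t) (hpos x t ht).le
  set p := q / (q - 1)
  set m := 2 * p with hmdef
  have hm : 2 < m := by linarith
  have hl := lamc_nonneg N (by linarith : 1 < m) hε
  set lam := lamc N m ε
  have hΦ := Phi_C2 hm hη hc hε lam κ
  have hsupp := Phi_supp hN hm hη hc h01 hε hl hκ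
  set A := Ar N ε κ with hAdef
  have hT : 0 < T := lt_of_lt_of_le hs0 hsT
  have hRc := RRp_cont hη hc hp1
  have hgc : ContinuousOn (fun z : Euc N × ℝ => C1 * (RR N η z.1 z.2 ^ p + κ ^ m)) (QQ N) :=
    continuousOn_const.mul (hRc.add continuousOn_const)
  have huq : ContinuousOn (fun z : Euc N × ℝ => u z.1 z.2 ^ q * Phi N m η ε lam κ z.1 z.2) (QQ N) :=
    ((C2.cont huC).rpow_const fun _ _ => Or.inr (by linarith)).mul hΦ.cont
  have hvol : (volume : Measure (Euc N)).real (closedBall 0 A) * κ ^ m ≤ (volume : Measure (Euc N)).real (ball 0 1) * √(1 / ε ^ N) * κ := by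
    have e1 : (volume : Measure (Euc N)).real (closedBall 0 A) = √(1 / (κ * ε ^ N)) * (volume : Measure (Euc N)).real (ball 0 1) := by
      rw [measureReal_def, Measure.addHaar_closedBall _ _ (Ar_nonneg _ _ _), finrank_euclideanSpace, Fintype.card_fin, Ar_pow hN,
        ENNReal.toReal_mul, ENNReal.toReal_ofReal (Real.sqrt_nonneg _), measureReal_def]
    have e2 : √(1 / (κ * ε ^ N)) = √(1 / κ) * √(1 / ε ^ N) := by
      rw [← Real.sqrt_mul (by positivity)]
      congr 1
      field_simp
    have e3 : √(1 / κ) ≤ 1 / κ := by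
      rw [Real.sqrt_le_left (by positivity)]
      have : 1 ≤ 1 / κ := by rw [le_div_iff₀ hκ]; linarith
      nlinarith
    have e4 : κ ^ m ≤ κ ^ (2 : ℝ) := Real.rpow_le_rpow_of_exponent_ge hκ hκ1 hm.le
    have e5 : √(1 / κ) * κ ^ m ≤ κ := by
      calc √(1 / κ) * κ ^ m ≤ 1 / κ * κ ^ (2 : ℝ) := by gcongr
        _ = κ := by rw [Real.rpow_two]; field_simp
    rw [e1, e2]
    calc _ = (volume : Measure (Euc N)).real (ball 0 1) * √(1 / ε ^ N) * (√(1 / κ) * κ ^ m) := by ring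
      _ ≤ _ := by gcongr
  have hg : ∀ s, 0 < s → s ≤ T → ∫ t in Ioc s T, ∫ x in closedBall (0 : Euc N) A, C1 * (RR N η x t ^ p + κ ^ m) ≤
      C1 * Rnorm N q η + C1 * (T * ((volume : Measure (Euc N)).real (ball 0 1) * √(1 / ε ^ N))) * κ := by
    intro s hs hsT
    have hI := RRp_int_t hη hc h01 hp1
    have n0 : ∀ t, 0 ≤ ∫ x, RR N η x t ^ p := fun t => integral_nonneg fun x => Real.rpow_nonneg (RR_nonneg η x t) _
    have hsub : Ioc s T ⊆ Ioi 0 := fun t ht => hs.trans ht.1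
    calc _ ≤ ∫ t in Ioc s T, (C1 * (∫ x, RR N η x t ^ p) + C1 * ((volume : Measure (Euc N)).real (closedBall 0 A) * κ ^ m)) := by
          refine setIntegral_mono_on (time_int (f := fun x t => C1 * (RR N η x t ^ p + κ ^ m)) hgc A hs)
            (((hI.mono_set hsub).const_mul _).add (integrableOn_const (by simp))) measurableSet_Ioc fun t ht => ?_
          have ht0 : 0 < t := hs.trans ht.1
          rw [integral_const_mul, integral_add (RRp_int_x hη hc hp1 ht0).integrableOn (integrableOn_const measure_closedBall_lt_top.ne),
            setIntegral_const, smul_eq_mul, mul_add]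
          exact add_le_add (mul_le_mul_of_nonneg_left (setIntegral_le_integral (RRp_int_x hη hc hp1 ht0) (Eventually.of_forall fun x => Real.rpow_nonneg (RR_nonneg η x t) _)) hC1.le) le_rfl
      _ = C1 * (∫ t in Ioc s T, ∫ x, RR N η x t ^ p) + C1 * ((T - s) * ((volume : Measure (Euc N)).real (closedBall 0 A) * κ ^ m)) := by
          rw [integral_add ((hI.mono_set hsub).const_mul _) (integrableOn_const (by simp)), integral_const_mul, setIntegral_const, smul_eq_mul,
            Real.volume_real_Ioc_of_le hsT]
          ring
      _ ≤ C1 * Rnorm N q η + C1 * (T * ((volume : Measure (Euc N)).real (ball 0 1) * √(1 / ε ^ N) * κ)) := by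
          rw [hRn]
          gcongr
          · exact Eventually.of_forall n0
          · linarith
      _ = _ := by ring
  have hlim := (init_zero hm hη hc h01 hK hε hl hκ huC hpos htr A).add_const (C1 * Rnorm N q η + C1 * (T * ((volume : Measure (Euc N)).real (ball 0 1) * √(1 / ε ^ N))) * κ)
  rw [zero_add] at hlim
  refine ge_of_tendsto hlim ?_
  filter_upwards [Ioc_mem_nhdsGT hs0] with s hs
  have hen := energy huC hΦ hsupp hq hpos heq (g := fun x t => C1 * (RR N η x t ^ p + κ ^ m)) hgc hpt' hs.1 (hs.2.trans hsT)
  have hmon : ∫ t in Ioc s0 T, ∫ x in closedBall (0 : Euc N) A, u x t ^ q * Phi N m η ε lam κ x t ≤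
      ∫ t in Ioc s T, ∫ x in closedBall (0 : Euc N) A, u x t ^ q * Phi N m η ε lam κ x t := by
    refine setIntegral_mono_set (time_int (f := fun x t => u x t ^ q * Phi N m η ε lam κ x t) huq A hs.1) ?_ ?_
    · filter_upwards [ae_restrict_mem measurableSet_Ioc] with t ht
      exact integral_nonneg fun x => mul_nonneg (Real.rpow_nonneg (hpos x t (hs.1.trans ht.1)).le _) (Phi_nonneg x t)
    · exact (Ioc_subset_Ioc_left hs.2).eventuallyLE
  linarith [hg s hs.1 (hs.2.trans hsT)]


def EE (N : ℕ) (R : ℝ) : Set (Euc N × ℝ) := {p : Euc N × ℝ | ‖p.1‖ ^ 2 + p.2 ≤ R ^ 2}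

theorem EE_meas (N : ℕ) (R : ℝ) : MeasurableSet (EE N R) := by
  apply IsClosed.measurableSet
  exact isClosed_le (by fun_prop) continuous_const

theorem eps_choice (N : ℕ) (m T A : ℝ) : ∃ ε : ℝ, 0 < ε ∧ ε ≤ 1 ∧
    3 / 4 ≤ Real.exp (-lamc N m ε * T) * ((1 + ε * A ^ 2) ^ N)⁻¹ := by
  have hcont : ContinuousAt (fun ε : ℝ => Real.exp (-lamc N m ε * T) * ((1 + ε * A ^ 2) ^ N)⁻¹) 0 := by
    unfold lamc
    refine ContinuousAt.mul (by fun_prop) (ContinuousAt.inv₀ (by fun_prop) (by simp))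
  have h0 : Real.exp (-lamc N m 0 * T) * ((1 + 0 * A ^ 2) ^ N)⁻¹ = 1 := by simp [lamc]
  have h1 : ∀ᶠ ε in nhds (0 : ℝ), 3 / 4 < Real.exp (-lamc N m ε * T) * ((1 + ε * A ^ 2) ^ N)⁻¹ :=
    hcont.eventually_const_lt (by beta_reduce; rw [h0]; norm_num)
  have h2 := (h1.filter_mono (nhdsWithin_le_nhds (s := Ioi 0))).and (Ioc_mem_nhdsGT (zero_lt_one (α := ℝ)))
  obtain ⟨ε, h3, h4⟩ := h2.exists
  exact ⟨ε, h4.1, h4.2, h3.le⟩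

theorem psi_low {N : ℕ} {ε lam T A : ℝ} (hε : 0 < ε) (hl : 0 ≤ lam)
    (h : 3 / 4 ≤ Real.exp (-lam * T) * ((1 + ε * A ^ 2) ^ N)⁻¹) {x : Euc N} (hx : ‖x‖ ≤ A) {t : ℝ} (ht : t ≤ T) :
    3 / 4 ≤ psi N ε lam x t := by
  refine h.trans ?_
  unfold psi wt
  refine mul_le_mul (Real.exp_le_exp.2 ?_) ?_ (by positivity) (Real.exp_pos _).le
  · nlinarith
  · gcongr

theorem stepC {N : ℕ} (hN : 1 ≤ N) {q : ℝ} (hq : 1 < q) : ∃ C : ℝ, 0 < C ∧ ∀ {R : ℝ}, 0 < R → ∀ {η : Euc N → ℝ}, ContDiff ℝ 2 η → HasCompactSupport η →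
    tsupport η ⊆ ball (0 : Euc N) R →
    (∀ x, 0 ≤ η x ∧ η x ≤ 1) → ∀ {K : Set (Euc N)}, (∀ x ∈ K, η x = 1) → ∀ {u : Euc N → ℝ → ℝ}, IsSol N q u K →
    ∀ {T : ℝ}, R ^ 2 ≤ T → ∀ (A : ℝ) {s : ℝ}, 0 < s → s ≤ T →
    (∫ p in (closedBall (0 : Euc N) A ×ˢ Ioc s T) \ EE N R, u p.1 p.2 ^ q) + (∫ x in closedBall (0 : Euc N) A, u x T) ≤ C * Rnorm N q η := by
  obtain ⟨C1, hC1, hB⟩ := stepB hN hq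
  obtain ⟨c, hc0, hc1, hgap⟩ := heat_gap hN
  have hq1 : 0 < q - 1 := by linarith
  have hp1 : 1 < q / (q - 1) := by rw [lt_div_iff₀ hq1]; linarith
  set m := 2 * (q / (q - 1)) with hmdef
  have hm : 2 < m := by linarith
  set a := (c / 2) ^ m with hadef
  have ha : 0 < a := Real.rpow_pos_of_pos (by linarith) _
  refine ⟨2 * C1 / a, by positivity, fun {R} hR {η} hη hc hts h01 {K} hK {u} hu {T} hRT A {s} hs hsT => ?_⟩
  have hT : 0 < T := hs.trans_le hsT
  have hB' := fun {ε κ : ℝ} (hε : 0 < ε) (hε1 : ε ≤ 1) (hκ : 0 < κ) (hκ1 : κ ≤ 1) => hB hη hc h01 hK hu hε hε1 hκ hκ1 hs hsT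
  obtain ⟨huC, hpos, -, -⟩ := hu
  obtain ⟨ε, hε, hε1, hψ⟩ := eps_choice N m T A
  have hl := lamc_nonneg N (by linarith : 1 < m) hε
  set lam := lamc N m ε
  have hlow : ∀ {κ : ℝ}, κ ≤ c / 4 → ∀ x t, ‖x‖ ≤ A → 0 < t → t ≤ T → R ^ 2 ≤ ‖x‖ ^ 2 + t → a ≤ Phi N m η ε lam κ x t := by
    intro κ hκ x t hx ht htT hxt
    have h1 := hgap R η hR hη.continuous hc hts h01 x t ht hxt
    have h2 := psi_low hε hl hψ hx htT
    unfold Phi pp theta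
    refine Real.rpow_le_rpow (by linarith) (le_max_of_le_left ?_) (by linarith)
    nlinarith
  have huc := C2.cont huC
  have huqc : ContinuousOn (fun z : Euc N × ℝ => u z.1 z.2 ^ q) (QQ N) :=
    huc.rpow_const fun _ _ => Or.inr (by linarith)
  set D := (closedBall (0 : Euc N) A ×ˢ Ioc s T) \ EE N R with hD
  have hDm : MeasurableSet D := (measurableSet_closedBall.prod measurableSet_Ioc).diff (EE_meas N R)
  have key : ∀ κ, 0 < κ → κ ≤ c / 4 → 1 / 2 * (a * ∫ p in D, u p.1 p.2 ^ q) + a * (∫ x in closedBall (0 : Euc N) A, u x T) ≤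
      C1 * Rnorm N q η + C1 * (T * ((volume : Measure (Euc N)).real (ball 0 1) * √(1 / ε ^ N))) * κ := by
    intro κ hκ hκc
    refine le_trans ?_ (hB' hε hε1 hκ (by linarith))
    have hΦ := Phi_C2 hm hη hc hε lam κ
    have hsupp := Phi_supp hN hm hη hc h01 hε hl hκ
    set A' := Ar N ε κ
    have hAA : closedBall (0 : Euc N) A ⊆ closedBall 0 A' := by
      intro x hx
      by_contra hx'
      have h1 := hsupp T hT x hx'
      have h2 := hlow hκc x T (by simpa using hx) hT le_rfl (by nlinarith [sq_nonneg ‖x‖])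
      linarith
    have hfc : ContinuousOn (fun z : Euc N × ℝ => u z.1 z.2 ^ q * Phi N m η ε lam κ z.1 z.2) (QQ N) := huqc.mul hΦ.cont
    have hgc : ContinuousOn (fun z : Euc N × ℝ => u z.1 z.2 * Phi N m η ε lam κ z.1 z.2) (QQ N) := huc.mul hΦ.cont
    have hpi := prod_int (f := fun x t => u x t ^ q * Phi N m η ε lam κ x t) hfc A' hs (T := T)
    have hpi0 := prod_int (f := fun x t => u x t ^ q) huqc A' hs (T := T)
    have hsw := integral_prod_symm _ hpi
    rw [Measure.prod_restrict, ← Measure.volume_eq_prod] at hpi hpi0 hsw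
    simp only [Function.uncurry] at hsw
    have hDs : D ⊆ closedBall (0 : Euc N) A' ×ˢ Ioc s T := fun z hz => ⟨hAA hz.1.1, hz.1.2⟩
    refine add_le_add (mul_le_mul_of_nonneg_left ?_ (by norm_num)) ?_
    · rw [← hsw, ← integral_const_mul]
      calc _ ≤ ∫ p in D, u p.1 p.2 ^ q * Phi N m η ε lam κ p.1 p.2 := by
            refine setIntegral_mono_on (Integrable.const_mul (IntegrableOn.mono_set hpi0 hDs) a) (IntegrableOn.mono_set hpi hDs) hDm fun z hz => ?_
            have hz0 : 0 < z.2 := hs.trans hz.1.2.1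
            have hz1 : R ^ 2 ≤ ‖z.1‖ ^ 2 + z.2 := (not_le.1 hz.2).le
            rw [mul_comm]
            exact mul_le_mul_of_nonneg_left (hlow hκc z.1 z.2 (by simpa using hz.1.1) hz0 hz.1.2.2 hz1) (Real.rpow_nonneg (hpos _ _ hz0).le _)
        _ ≤ _ := by
            refine setIntegral_mono_set hpi ?_ hDs.eventuallyLE
            filter_upwards [ae_restrict_mem (measurableSet_closedBall.prod measurableSet_Ioc)] with z hz
            exact mul_nonneg (Real.rpow_nonneg (hpos _ _ (hs.trans hz.2.1)).le _) (Phi_nonneg _ _)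
    · rw [← integral_const_mul]
      have hi1 := slice_int (f := fun x t => u x t * Phi N m η ε lam κ x t) hgc A' hT
      have hi2 := slice_int (f := u) huc A' hT
      calc _ ≤ ∫ x in closedBall (0 : Euc N) A, u x T * Phi N m η ε lam κ x T := by
            refine setIntegral_mono_on (Integrable.const_mul (IntegrableOn.mono_set hi2 hAA) a) (IntegrableOn.mono_set hi1 hAA) measurableSet_closedBall fun x hx => ?_
            rw [mul_comm]
            exact mul_le_mul_of_nonneg_left (hlow hκc x T (by simpa using hx) hT le_rfl (by nlinarith [sq_nonneg ‖x‖])) (hpos _ _ hT).le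
        _ ≤ _ := by
            refine setIntegral_mono_set hi1 ?_ hAA.eventuallyLE
            exact Eventually.of_forall fun x => mul_nonneg (hpos _ _ hT).le (Phi_nonneg _ _)
  have hlim : Tendsto (fun κ : ℝ => C1 * Rnorm N q η + C1 * (T * ((volume : Measure (Euc N)).real (ball 0 1) * √(1 / ε ^ N))) * κ) (nhdsWithin 0 (Ioi 0))
      (nhds (C1 * Rnorm N q η)) := by
    refine Tendsto.mono_left ?_ nhdsWithin_le_nhds
    refine Continuous.tendsto' (by fun_prop) _ _ (by simp)
  have hfin := ge_of_tendsto hlim (by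
    filter_upwards [Ioc_mem_nhdsGT (by linarith : (0 : ℝ) < c / 4)] with κ hκ
    exact key κ hκ.1 hκ.2)
  have hI2 : 0 ≤ ∫ x in closedBall (0 : Euc N) A, u x T := integral_nonneg fun x => (hpos x T hT).le
  rw [div_mul_eq_mul_div, le_div_iff₀ ha]
  nlinarith [mul_nonneg ha.le hI2]

theorem lim_set {α : Type*} [MeasurableSpace α] {μ : Measure α} {f : α → ℝ} {S : ℕ → Set α} (hS : ∀ n, MeasurableSet (S n)) (hm : Monotone S)
    (h0 : ∀ x ∈ ⋃ n, S n, 0 ≤ f x) : ∃ (v : ℕ → ℝ) (L : ℝ), Tendsto v atTop (nhds L) ∧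
      ∫ x in ⋃ n, S n, f x ∂μ = L ∧ ∀ n, v n ≤ ∫ x in S n, f x ∂μ := by
  by_cases hi : IntegrableOn f (⋃ n, S n) μ
  · exact ⟨_, _, tendsto_setIntegral_of_monotone hS hm hi, rfl, fun n => le_rfl⟩
  · exact ⟨fun _ => 0, 0, tendsto_const_nhds, integral_undef hi, fun n => setIntegral_nonneg (hS n) fun x hx => h0 x (mem_iUnion.2 ⟨n, hx⟩)⟩

theorem mainthm (N : ℕ) (hN : 1 ≤ N) (q : ℝ) (hq : 1 < q) :
    ∃ C : ℝ, 0 < C ∧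
      ∀ r ρ T : ℝ, 0 < r → 0 < ρ → (r + ρ) ^ 2 ≤ T →
        ∀ K : Set (Euc N), IsCompact K → K ⊆ Metric.ball (0 : Euc N) r →
          ∀ η : Euc N → ℝ, TestFun N r ρ K η →
            ∀ u : Euc N → ℝ → ℝ, IsSol N q u K →
              (∫ p in (Set.univ ×ˢ Set.Ioc (0 : ℝ) T) \
                    {p : Euc N × ℝ | ‖p.1‖ ^ 2 + p.2 ≤ (r + ρ) ^ 2},
                  u p.1 p.2 ^ q) + (∫ x, u x T) ≤ C * Rnorm N q η := by
  obtain ⟨C, hC, hmain⟩ := stepC hN hq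
  refine ⟨C, hC, fun r ρ T hr hρ hT K _ _ η hη u hu => ?_⟩
  obtain ⟨hη1, hc, hts, h01, hK⟩ := hη
  have hR : 0 < r + ρ := by linarith
  have hT0 : 0 < T := lt_of_lt_of_le (by positivity) hT
  have hη2 : ContDiff ℝ 2 η := contDiff_infty.1 hη1 2
  have hb := fun n : ℕ => hmain hR hη2 hc hts h01 hK hu hT (n : ℝ) (s := T / (n + 1)) (by positivity)
    (div_le_self hT0.le (by linarith [Nat.cast_nonneg (α := ℝ) n]))
  have hpos := hu.2.1
  have hU1 : (⋃ n : ℕ, (closedBall (0 : Euc N) n ×ˢ Ioc (T / ((n : ℝ) + 1)) T) \ EE N (r + ρ)) = (Set.univ ×ˢ Set.Ioc (0 : ℝ) T) \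
                    {p : Euc N × ℝ | ‖p.1‖ ^ 2 + p.2 ≤ (r + ρ) ^ 2} := by
    ext ⟨x, t⟩
    simp only [mem_iUnion]
    constructor
    · rintro ⟨n, ⟨h1, h2⟩, h3⟩
      exact ⟨⟨trivial, lt_trans (by positivity) h2.1, h2.2⟩, h3⟩
    · rintro ⟨⟨-, h2⟩, h3⟩
      have h20 : 0 < t := h2.1
      obtain ⟨n, hn⟩ := exists_nat_ge (max ‖x‖ (T / t))
      refine ⟨n, ⟨?_, ?_, h2.2⟩, h3⟩
      · simpa using (le_max_left _ _).trans hn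
      · have h4 := (le_max_right _ _).trans hn
        rw [div_le_iff₀ h20] at h4
        change T / ((n : ℝ) + 1) < t
        rw [div_lt_iff₀ (by positivity)]
        nlinarith
  have hU2 : (⋃ n : ℕ, closedBall (0 : Euc N) n) = univ := iUnion_closedBall_nat 0
  obtain ⟨v1, L1, hL1, hE1, hle1⟩ := lim_set (μ := volume) (f := fun p : Euc N × ℝ => u p.1 p.2 ^ q)
    (S := fun n : ℕ => (closedBall (0 : Euc N) n ×ˢ Ioc (T / ((n : ℝ) + 1)) T) \ EE N (r + ρ))
    (fun n => (measurableSet_closedBall.prod measurableSet_Ioc).diff (EE_meas N _))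
    (by
      intro n k hnk
      have hnk' : (n : ℝ) ≤ k := by exact_mod_cast hnk
      refine sdiff_subset_sdiff_left (prod_mono (closedBall_subset_closedBall hnk') (Ioc_subset_Ioc_left ?_))
      gcongr)
    (by
      rw [hU1]
      intro z hz
      exact Real.rpow_nonneg (hpos _ _ hz.1.2.1).le _)
  obtain ⟨v2, L2, hL2, hE2, hle2⟩ := lim_set (μ := volume) (f := fun x : Euc N => u x T)
    (S := fun n : ℕ => closedBall (0 : Euc N) n) (fun n => measurableSet_closedBall)
    (fun n k hnk => closedBall_subset_closedBall (by exact_mod_cast hnk)) (fun x _ => (hpos x T hT0).le)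
  rw [hU1] at hE1
  rw [hU2, setIntegral_univ] at hE2
  rw [hE1, hE2]
  exact le_of_tendsto' (hL1.add hL2) fun n => (add_le_add (hle1 n) (hle2 n)).trans (hb n)

/-- Proposition 2.13: global `L^q`-estimate outside the parabolic region `ℰ_{r+ρ}`. -/
theorem stmt11 (N : ℕ) (hN : 1 ≤ N) (q : ℝ) (hq : 1 < q) :
    ∃ C : ℝ, 0 < C ∧
      ∀ r ρ T : ℝ, 0 < r → 0 < ρ → (r + ρ) ^ 2 ≤ T →
        ∀ K : Set (Euc N), IsCompact K → K ⊆ Metric.ball (0 : Euc N) r →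
          ∀ η : Euc N → ℝ, TestFun N r ρ K η →
            ∀ u : Euc N → ℝ → ℝ, IsSol N q u K →
              (∫ p in (Set.univ ×ˢ Set.Ioc (0 : ℝ) T) \
                    {p : Euc N × ℝ | ‖p.1‖ ^ 2 + p.2 ≤ (r + ρ) ^ 2},
                  u p.1 p.2 ^ q) + (∫ x, u x T) ≤ C * Rnorm N q η := mainthm N hN q hq

end
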